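/- arXiv:2106.12337 — 6 statements merged into one kernel-verified Lean document; each statement's English description precedes it below -/
import Mathlib

section
/- Let X be a real normed vector space, M ⊆ X a linear subspace, and Π : X → X a linear map. Then the following are equivalent: (i) there exists a constant C > 0 such that for every f ∈ X and every m ∈ M one has ‖Πf − m‖ + ‖f − Πf‖ ≤ C‖f − m‖; (ii) Π is invariant on M (Πm = m for all m ∈ M) and Π is stable (there exists C' > 0 with ‖Πg‖ ≤ C'‖g‖ for all g ∈ X). -/
/-- abstract necessity and sufficiency of invariance and stability,
cf. Kreuzer–Veeser. For a linear map `P` on a normed space `X` and a subspace `M`,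
the two-sided bound `‖Pf − m‖ + ‖f − Pf‖ ≤ C‖f − m‖` (for all `f` and `m ∈ M`)
holds for some `C > 0` iff `P` is invariant on `M` and bounded (stable). -/
theorem abstract_invariance_stability_iff
    {X : Type*} [NormedAddCommGroup X] [NormedSpace ℝ X]
    (M : Submodule ℝ X) (P : X →ₗ[ℝ] X) :
    (∃ C : ℝ, 0 < C ∧ ∀ f : X, ∀ m ∈ M, ‖P f - m‖ + ‖f - P f‖ ≤ C * ‖f - m‖) ↔
      ((∀ m ∈ M, P m = m) ∧ ∃ C' : ℝ, 0 < C' ∧ ∀ g : X, ‖P g‖ ≤ C' * ‖g‖) := by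
  constructor
  · rintro ⟨C, hC, h⟩
    refine ⟨fun m hm => ?_, C, hC, fun g => ?_⟩
    · have h1 := h m m hm
      rw [sub_self, norm_zero, mul_zero] at h1
      have h2 : ‖P m - m‖ = 0 :=
        le_antisymm (by linarith [norm_nonneg (m - P m)]) (norm_nonneg _)
      exact sub_eq_zero.mp (norm_eq_zero.mp h2)
    · have h1 := h g 0 M.zero_mem
      rw [sub_zero, sub_zero] at h1
      linarith [norm_nonneg (g - P g)]
  · rintro ⟨hinv, C, hC, h⟩
    refine ⟨2 * C + 1, by linarith, fun f m hm => ?_⟩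
    have h1 := h (f - m)
    rw [map_sub, hinv m hm] at h1
    have h2 : ‖f - P f‖ ≤ ‖f - m‖ + ‖P f - m‖ := by
      have h3 := norm_sub_le (f - m) (P f - m)
      rwa [sub_sub_sub_cancel_right] at h3
    linarith
end

section
/- Let d ≥ 1, let Ω ⊆ ℝ^d be a bounded open set, κ > 0, and let (ω_i)_{i∈I} be a finite family of open subsets of Ω such that every point of Ω belongs to at most N of the sets ω_i. Let Λ : T(Ω) → ℝ be a linear functional with ‖Λ‖_{*,Ω} < ∞. Then Σ_{i∈I} ‖Λ‖_{*,ω_i}² ≤ N · ‖Λ‖_{*,Ω}². -/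
open MeasureTheory Metric Set
open scoped ENNReal RealInnerProductSpace NNReal Classical

noncomputable section

abbrev Euc (d : ℕ) : Type := EuclideanSpace ℝ (Fin d)

/-- `T(ω)`: Lipschitz functions on `ℝ^d` vanishing identically outside `ω`. -/
def IsTest {d : ℕ} (ω : Set (Euc d)) (φ : Euc d → ℝ) : Prop :=
  (∃ L : ℝ≥0, LipschitzWith L φ) ∧ ∀ x ∉ ω, φ x = 0

/-- `∫_ω |∇φ|²`. -/
def gradSq {d : ℕ} (ω : Set (Euc d)) (φ : Euc d → ℝ) : ℝ :=
  ∫ x in ω, ‖gradient φ x‖ ^ 2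

/-- `∫_ω φ²`. -/
def sqIntg {d : ℕ} (ω : Set (Euc d)) (φ : Euc d → ℝ) : ℝ :=
  ∫ x in ω, (φ x) ^ 2

/-- squared energy norm `‖φ‖_{E,ω}² = ∫_ω |∇φ|² + κ² ∫_ω φ²`. -/
def energySq {d : ℕ} (κ : ℝ) (ω : Set (Euc d)) (φ : Euc d → ℝ) : ℝ :=
  gradSq ω φ + κ ^ 2 * sqIntg ω φ

/-- local dual norm `‖Λ‖_{*,ω} = sup {Λφ : φ ∈ T(ω), ‖φ‖_{E,ω} ≤ 1}`. -/
def dualNorm {d : ℕ} (κ : ℝ) (ω : Set (Euc d)) (Λ : (Euc d → ℝ) → ℝ) : ℝ≥0∞ :=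
  ⨆ φ ∈ {φ : Euc d → ℝ | IsTest ω φ ∧ energySq κ ω φ ≤ 1}, ENNReal.ofReal (Λ φ)

/-- inradius: supremum of radii of balls contained in `s`. -/
def inradius {d : ℕ} (s : Set (Euc d)) : ℝ :=
  sSup {r : ℝ | ∃ c, Metric.ball c r ⊆ s}

/-- the simplex spanned by an affine basis. -/
def simT {d : ℕ} (B : AffineBasis (Fin (d+1)) ℝ (Euc d)) : Set (Euc d) :=
  convexHull ℝ (Set.range ⇑B)

/-- the face of the simplex opposite to the vertex `z`. -/
def simFace {d : ℕ} (B : AffineBasis (Fin (d+1)) ℝ (Euc d)) (z : Fin (d+1)) : Set (Euc d) :=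
  convexHull ℝ (⇑B '' {y | y ≠ z})

/-- the standard `d`-simplex. -/
def Δstd (d : ℕ) : Set (Euc d) := {x | (∀ i, 0 ≤ x i) ∧ ∑ i, x i ≤ 1}

/-- the element bubble of the standard simplex. -/
def elemBubble (d : ℕ) (x : Euc d) : ℝ := (1 - ∑ i, x i) * ∏ i, x i

lemma aux_isTest_add {d : ℕ} {ω : Set (Euc d)} {φ ψ : Euc d → ℝ} (h : IsTest ω φ)
    (h' : IsTest ω ψ) : IsTest ω (φ + ψ) := by
  obtain ⟨⟨L, hL⟩, h0⟩ := h
  obtain ⟨⟨M, hM⟩, h1⟩ := h'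
  exact ⟨⟨L + M, hL.add hM⟩, fun x hx => by simp [h0 x hx, h1 x hx]⟩

lemma aux_isTest_smul {d : ℕ} {ω : Set (Euc d)} {φ : Euc d → ℝ} (c : ℝ) (h : IsTest ω φ) :
    IsTest ω (c • φ) := by
  obtain ⟨⟨L, hL⟩, h0⟩ := h
  refine ⟨⟨‖c‖₊ * L, ?_⟩, fun x hx => by simp [h0 x hx]⟩
  exact (lipschitzWith_smul c).comp hL

lemma aux_isTest_zero {d : ℕ} {ω : Set (Euc d)} : IsTest ω (0 : Euc d → ℝ) :=
  ⟨⟨0, LipschitzWith.const 0⟩, fun _ _ => rfl⟩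

lemma aux_isTest_sum {d : ℕ} {ω : Set (Euc d)} {I : Type*} (s : Finset I) (φ : I → Euc d → ℝ)
    (h : ∀ i, IsTest ω (φ i)) : IsTest ω (∑ i ∈ s, φ i) := by
  induction s using Finset.induction_on with
  | empty => simpa using aux_isTest_zero
  | insert a s ha ih => rw [Finset.sum_insert ha]; exact aux_isTest_add (h a) ih

lemma aux_norm_gradient {d : ℕ} (φ : Euc d → ℝ) (x : Euc d) :
    ‖gradient φ x‖ = ‖fderiv ℝ φ x‖ := by
  simp [gradient]

/-- the derivative vanishes a.e. on the complement of `ω` -/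
lemma aux_fderiv_zero {d : ℕ} (hd : 1 ≤ d) {ω : Set (Euc d)} (ho : IsOpen ω) {φ : Euc d → ℝ}
    (h : IsTest ω φ) : ∀ᵐ x : Euc d, x ∉ ω → fderiv ℝ φ x = 0 := by
  obtain ⟨⟨L, hL⟩, h0⟩ := h
  set e : Euc d := EuclideanSpace.single (⟨0, hd⟩ : Fin d) (1 : ℝ) with he
  have hne : e ≠ 0 := by
    intro h
    have := congrArg norm h
    simp [he] at this
  set s : Set (Euc d) := ωᶜ ∩ {x | DifferentiableAt ℝ φ x} with hs
  have hms : MeasurableSet s :=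
    ho.measurableSet.compl.inter (measurableSet_of_differentiableAt ℝ φ)
  have happ : ApproximatesLinearOn (fun x => φ x • e) (0 : Euc d →L[ℝ] Euc d) s 0 := by
    intro x hx y hy
    simp [h0 x hx.1, h0 y hy.1]
  have key := happ.norm_fderiv_sub_le volume hms (fun x => (fderiv ℝ φ x).smulRight e)
    (fun x hx => (hx.2.hasFDerivAt.smul_const e).hasFDerivWithinAt)
  rw [ae_restrict_iff' hms] at key
  filter_upwards [key, hL.ae_differentiableAt] with x hx hdx hxω
  have h1 := hx ⟨hxω, hdx⟩
  have h2 : fderiv ℝ φ x = 0 ∨ e = 0 := by simpa using h1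
  exact h2.resolve_right hne

lemma aux_int_grad {d : ℕ} {ω Ω : Set (Euc d)} (hb : Bornology.IsBounded Ω) {φ : Euc d → ℝ}
    (h : IsTest ω φ) : IntegrableOn (fun x => ‖gradient φ x‖ ^ 2) Ω := by
  obtain ⟨⟨L, hL⟩, h0⟩ := h
  simp_rw [aux_norm_gradient]
  refine Measure.integrableOn_of_bounded (M := (L : ℝ) ^ 2) hb.measure_lt_top.ne ?_ ?_
  · exact ((measurable_fderiv ℝ φ).norm.pow_const 2).aestronglyMeasurable
  · refine Filter.Eventually.of_forall fun x => ?_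
    rw [Real.norm_of_nonneg (by positivity)]
    gcongr
    exact norm_fderiv_le_of_lipschitz ℝ hL

lemma aux_int_sq {d : ℕ} {ω Ω : Set (Euc d)} (hb : Bornology.IsBounded Ω) {φ : Euc d → ℝ}
    (h : IsTest ω φ) : IntegrableOn (fun x => (φ x) ^ 2) Ω := by
  obtain ⟨⟨L, hL⟩, h0⟩ := h
  exact ((hL.continuous.pow 2).continuousOn.integrableOn_compact hb.isCompact_closure).mono_set
    subset_closure

lemma aux_pt {V : Type*} [NormedAddCommGroup V] {I : Type*} [Fintype I] (v : I → V)
    (p : I → Prop) (N : ℕ) (hN : Nat.card {i // p i} ≤ N) (hv : ∀ i, ¬ p i → v i = 0) :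
    ‖∑ i, v i‖ ^ 2 ≤ N * ∑ i, ‖v i‖ ^ 2 := by
  have hc : (Finset.univ.filter p).card ≤ N := by
    rwa [Nat.card_eq_fintype_card, Fintype.card_subtype] at hN
  have e1 : ∑ i, v i = ∑ i ∈ Finset.univ.filter p, v i := by
    rw [Finset.sum_filter]
    refine Finset.sum_congr rfl fun i _ => ?_
    split_ifs with h
    · rfl
    · exact hv i h
  calc ‖∑ i, v i‖ ^ 2 ≤ (∑ i ∈ Finset.univ.filter p, ‖v i‖) ^ 2 := by
        rw [e1]; gcongr; exact norm_sum_le _ _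
    _ ≤ ((Finset.univ.filter p).card : ℝ) * ∑ i ∈ Finset.univ.filter p, ‖v i‖ ^ 2 :=
        sq_sum_le_card_mul_sum_sq
    _ ≤ N * ∑ i, ‖v i‖ ^ 2 := by
        gcongr
        exact Finset.filter_subset _ _

lemma aux_grad_restrict {d : ℕ} (hd : 1 ≤ d) {ω Ω : Set (Euc d)} (ho : IsOpen ω) (hO : IsOpen Ω)
    (hs : ω ⊆ Ω) {φ : Euc d → ℝ} (h : IsTest ω φ) : gradSq Ω φ = gradSq ω φ := by
  refine setIntegral_eq_of_subset_of_ae_sdiff_eq_zero hO.measurableSet.nullMeasurableSet hs ?_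
  filter_upwards [aux_fderiv_zero hd ho h] with x hx hx'
  simp [aux_norm_gradient, hx hx'.2]

lemma aux_sq_restrict {d : ℕ} {ω Ω : Set (Euc d)} (hO : IsOpen Ω)
    (hs : ω ⊆ Ω) {φ : Euc d → ℝ} (h : IsTest ω φ) : sqIntg Ω φ = sqIntg ω φ := by
  refine setIntegral_eq_of_subset_of_ae_sdiff_eq_zero hO.measurableSet.nullMeasurableSet hs ?_
  filter_upwards with x hx'
  simp [h.2 x hx'.2]

lemma aux_energy_smul {d : ℕ} (κ : ℝ) (Ω : Set (Euc d)) (c : ℝ) (φ : Euc d → ℝ) :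
    energySq κ Ω (c • φ) = c ^ 2 * energySq κ Ω φ := by
  have h1 : ∀ x, ‖gradient (c • φ) x‖ ^ 2 = c ^ 2 * ‖gradient φ x‖ ^ 2 := by
    intro x
    rw [aux_norm_gradient, aux_norm_gradient, fderiv_const_smul_field, Pi.smul_apply, norm_smul, mul_pow]
    simp
  have h2 : ∀ x, ((c • φ) x) ^ 2 = c ^ 2 * (φ x) ^ 2 := by
    intro x
    simp [mul_pow]
  unfold energySq gradSq sqIntg
  simp_rw [h1, h2, integral_const_mul]
  ring

lemma aux_energy_sum {d : ℕ} (hd : 1 ≤ d) (κ : ℝ)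
    (Ω : Set (Euc d)) (hΩ : IsOpen Ω) (hbdd : Bornology.IsBounded Ω)
    {I : Type*} [Fintype I] (ω : I → Set (Euc d))
    (hopen : ∀ i, IsOpen (ω i)) (hsub : ∀ i, ω i ⊆ Ω)
    (N : ℕ) (hover : ∀ x ∈ Ω, Nat.card {i : I // x ∈ ω i} ≤ N)
    (φ : I → Euc d → ℝ) (h : ∀ i, IsTest (ω i) (φ i)) :
    energySq κ Ω (∑ i, φ i) ≤ N * ∑ i, energySq κ (ω i) (φ i) := by
  have hT : IsTest Ω (∑ i, φ i) := aux_isTest_sum _ _ fun i =>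
    ⟨(h i).1, fun x hx => (h i).2 x fun hx' => hx (hsub i hx')⟩
  have hg : gradSq Ω (∑ i, φ i) ≤ N * ∑ i, gradSq (ω i) (φ i) := by
    simp_rw [← fun i => aux_grad_restrict hd (hopen i) hΩ (hsub i) (h i)]
    unfold gradSq
    rw [← integral_finsetSum _ fun i _ => aux_int_grad hbdd (h i), ← integral_const_mul]
    refine setIntegral_mono_on_ae (aux_int_grad hbdd hT)
      ((integrable_finsetSum _ fun i _ => aux_int_grad hbdd (h i)).const_mul _)
      hΩ.measurableSet ?_
    have a1 : ∀ᵐ x : Euc d, ∀ i, x ∉ ω i → fderiv ℝ (φ i) x = 0 :=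
      ae_all_iff.2 fun i => aux_fderiv_zero hd (hopen i) (h i)
    have a2 : ∀ᵐ x : Euc d, ∀ i, DifferentiableAt ℝ (φ i) x :=
      ae_all_iff.2 fun i => (h i).1.choose_spec.ae_differentiableAt
    filter_upwards [a1, a2] with x h1 h2 hx
    simp_rw [aux_norm_gradient]
    rw [fderiv_sum fun i _ => h2 i]
    exact aux_pt _ (fun i => x ∈ ω i) N (hover x hx) h1
  have hq : sqIntg Ω (∑ i, φ i) ≤ N * ∑ i, sqIntg (ω i) (φ i) := by
    simp_rw [← fun i => aux_sq_restrict hΩ (hsub i) (h i)]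
    unfold sqIntg
    rw [← integral_finsetSum _ fun i _ => aux_int_sq hbdd (h i), ← integral_const_mul]
    refine setIntegral_mono_on (aux_int_sq hbdd hT)
      ((integrable_finsetSum _ fun i _ => aux_int_sq hbdd (h i)).const_mul _)
      hΩ.measurableSet ?_
    intro x hx
    have := aux_pt (fun i => φ i x) (fun i => x ∈ ω i) N (hover x hx) fun i => (h i).2 x
    simpa using this
  unfold energySq
  rw [Finset.sum_add_distrib, ← Finset.mul_sum]
  have := mul_le_mul_of_nonneg_left hq (sq_nonneg κ)
  linarith

lemma aux_finite {d : ℕ} (hd : 1 ≤ d) (κ : ℝ)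
    (Ω : Set (Euc d)) (hΩ : IsOpen Ω) (hbdd : Bornology.IsBounded Ω)
    {I : Type*} [Fintype I] (ω : I → Set (Euc d))
    (hopen : ∀ i, IsOpen (ω i)) (hsub : ∀ i, ω i ⊆ Ω)
    (N : ℕ) (hover : ∀ x ∈ Ω, Nat.card {i : I // x ∈ ω i} ≤ N)
    (Λ : (Euc d → ℝ) → ℝ)
    (hadd : ∀ φ ψ : Euc d → ℝ, Λ (φ + ψ) = Λ φ + Λ ψ)
    (hsmul : ∀ (c : ℝ) (φ : Euc d → ℝ), Λ (c • φ) = c * Λ φ)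
    (hfin : dualNorm κ Ω Λ ≠ ⊤)
    (φ : I → Euc d → ℝ) (h : ∀ i, IsTest (ω i) (φ i)) (hE : ∀ i, energySq κ (ω i) (φ i) ≤ 1) :
    ∑ i, (ENNReal.ofReal (Λ (φ i))) ^ 2 ≤ (N : ℝ≥0∞) * (dualNorm κ Ω Λ) ^ 2 := by
  obtain ⟨D, hD⟩ : ∃ D : ℝ≥0, (D : ℝ≥0∞) = dualNorm κ Ω Λ := ⟨_, ENNReal.coe_toNNReal hfin⟩
  set a : I → ℝ := fun i => max (Λ (φ i)) 0 with ha
  set S : ℝ := ∑ i, a i ^ 2 with hS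
  have hS0 : 0 ≤ S := Finset.sum_nonneg fun i _ => sq_nonneg _
  set ψ : Euc d → ℝ := ∑ i, a i • φ i with hψ
  have hTi : ∀ i, IsTest (ω i) (a i • φ i) := fun i => aux_isTest_smul _ (h i)
  have hT : IsTest Ω ψ := aux_isTest_sum _ _ fun i =>
    ⟨(hTi i).1, fun x hx => (hTi i).2 x fun hx' => hx (hsub i hx')⟩
  have hEψ : energySq κ Ω ψ ≤ N * S := by
    refine (aux_energy_sum hd κ Ω hΩ hbdd ω hopen hsub N hover _ hTi).trans ?_
    gcongr
    refine Finset.sum_le_sum fun i _ => ?_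
    rw [aux_energy_smul]
    exact mul_le_of_le_one_right (sq_nonneg _) (hE i)
  have hsum : ∀ s : Finset I, Λ (∑ i ∈ s, a i • φ i) = ∑ i ∈ s, a i ^ 2 := by
    intro s
    induction s using Finset.induction_on with
    | empty => simpa using hsmul 0 0
    | insert j s hj ih =>
      rw [Finset.sum_insert hj, Finset.sum_insert hj, hadd, ih, hsmul]
      congr 1
      simp only [ha]
      rcases le_total (Λ (φ j)) 0 with h | h
      · simp [h]
      · simp [h, sq]
  have hΛψ : Λ ψ = S := hsum _
  have key : ∀ ε > 0, S ^ 2 ≤ (N * S + ε) * (D : ℝ) ^ 2 := by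
    intro ε hε
    have hp : 0 < N * S + ε := by positivity
    set c := (Real.sqrt (N * S + ε))⁻¹ with hc
    have hc2 : c ^ 2 = (N * S + ε)⁻¹ := by rw [hc, inv_pow, Real.sq_sqrt hp.le]
    have hle : energySq κ Ω (c • ψ) ≤ 1 := by
      rw [aux_energy_smul, hc2, inv_mul_le_one₀ hp]
      linarith
    have hle2 : ENNReal.ofReal (Λ (c • ψ)) ≤ dualNorm κ Ω Λ :=
      le_iSup₂_of_le (c • ψ) ⟨aux_isTest_smul c hT, hle⟩ le_rfl
    rw [← hD, hsmul, hΛψ, ENNReal.ofReal_le_iff_le_toReal (by simp)] at hle2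
    have hle3 : c * S ≤ D := by simpa using hle2
    have hc0 : 0 ≤ c := by positivity
    have h4 : (c * S) ^ 2 ≤ (D : ℝ) ^ 2 := by gcongr
    rw [mul_pow, hc2, inv_mul_le_iff₀ hp] at h4
    exact h4
  have key2 : S ^ 2 ≤ N * S * (D : ℝ) ^ 2 := by
    have ht : Filter.Tendsto (fun ε : ℝ => (N * S + ε) * (D : ℝ) ^ 2) (nhdsWithin 0 (Ioi 0))
        (nhds ((N * S + 0) * (D : ℝ) ^ 2)) := by
      refine Filter.Tendsto.mono_left (Continuous.tendsto ?_ 0) nhdsWithin_le_nhds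
      fun_prop
    have := ge_of_tendsto ht (Filter.eventually_of_mem self_mem_nhdsWithin fun ε hε => key ε hε)
    simpa using this
  have key3 : S ≤ N * (D : ℝ) ^ 2 := by
    rcases hS0.eq_or_lt with h0 | h0
    · rw [← h0]; positivity
    · refine le_of_mul_le_mul_left ?_ h0
      linarith
  have e1 : ∑ i, (ENNReal.ofReal (Λ (φ i))) ^ 2 = ENNReal.ofReal S := by
    rw [hS, ENNReal.ofReal_sum_of_nonneg fun i _ => sq_nonneg _]
    refine Finset.sum_congr rfl fun i _ => ?_
    rw [ENNReal.ofReal_pow (le_max_right _ _)]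
    simp [ha, ENNReal.ofReal_max]
  rw [e1, ← hD]
  refine ENNReal.ofReal_le_of_le_toReal ?_
  simpa using key3

/-- localization of the dual energy norm, upper bound by the global norm.
For a finite family of open subsets `ω i ⊆ Ω` with overlap at most `N` and a linear
functional `Λ` with finite global dual norm,
`Σᵢ ‖Λ‖_{*,ωᵢ}² ≤ N ‖Λ‖_{*,Ω}²`. -/
theorem localization_sum_le_global
    (d : ℕ) (hd : 1 ≤ d) (κ : ℝ) (hκ : 0 < κ)
    (Ω : Set (Euc d)) (hΩ : IsOpen Ω) (hbdd : Bornology.IsBounded Ω)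
    {I : Type*} [Fintype I] (ω : I → Set (Euc d))
    (hopen : ∀ i, IsOpen (ω i)) (hsub : ∀ i, ω i ⊆ Ω)
    (N : ℕ) (hover : ∀ x ∈ Ω, Nat.card {i : I // x ∈ ω i} ≤ N)
    (Λ : (Euc d → ℝ) → ℝ)
    (hadd : ∀ φ ψ : Euc d → ℝ, Λ (φ + ψ) = Λ φ + Λ ψ)
    (hsmul : ∀ (c : ℝ) (φ : Euc d → ℝ), Λ (c • φ) = c * Λ φ)
    (hfin : dualNorm κ Ω Λ ≠ ⊤) :
    ∑ i : I, (dualNorm κ (ω i) Λ) ^ 2 ≤ (N : ℝ≥0∞) * (dualNorm κ Ω Λ) ^ 2 := by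
  have hseq : ∀ i, ∃ φ : ℕ → Euc d → ℝ, (∀ n, IsTest (ω i) (φ n) ∧ energySq κ (ω i) (φ n) ≤ 1) ∧
      Filter.Tendsto (fun n => ENNReal.ofReal (Λ (φ n))) Filter.atTop
        (nhds (dualNorm κ (ω i) Λ)) := by
    intro i
    have hne : ((fun φ => ENNReal.ofReal (Λ φ)) ''
        {φ : Euc d → ℝ | IsTest (ω i) φ ∧ energySq κ (ω i) φ ≤ 1}).Nonempty := by
      refine Set.Nonempty.image _ ⟨0, aux_isTest_zero, ?_⟩
      have := aux_energy_smul κ (ω i) 0 0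
      simp at this
      rw [this]
      exact zero_le_one
    obtain ⟨u, -, hu, hmem⟩ := exists_seq_tendsto_sSup hne (OrderTop.bddAbove _)
    choose φ hφ hφu using hmem
    refine ⟨φ, hφ, ?_⟩
    rw [sSup_image] at hu
    have : (fun n => ENNReal.ofReal (Λ (φ n))) = u := funext hφu
    rw [this]
    exact hu
  choose φ hφ hlim using hseq
  refine le_of_tendsto' (tendsto_finsetSum _ fun i _ =>
    ((ENNReal.continuous_pow 2).tendsto _).comp (hlim i)) fun n => ?_
  exact aux_finite hd κ Ω hΩ hbdd ω hopen hsub N hover Λ hadd hsmul hfin (fun i => φ i n)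
    (fun i => (hφ i n).1) (fun i => (hφ i n).2)
end
end

section
/- Let d ≥ 1 and let Δ = {x ∈ ℝ^d : x_i ≥ 0 for all i, Σ_i x_i ≤ 1} be the standard d-simplex with barycentric coordinates λ₀(x) = 1 − Σ_i x_i, λ_i(x) = x_i, and element bubble b(x) = Π_{i=0}^d λ_i(x). There exists a constant c > 0, depending only on d, such that for every affine function v : ℝ^d → ℝ one has ∫_Δ v² ≤ c ∫_Δ b v². -/
open MeasureTheory Metric Set
open scoped ENNReal RealInnerProductSpace NNReal Classical

noncomputable section

lemma aux_isCompact (d : ℕ) : IsCompact (Δstd d) := by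
  apply Metric.isCompact_of_isClosed_isBounded
  · have : Δstd d = (⋂ i, {x : Euc d | 0 ≤ x i}) ∩ {x : Euc d | ∑ i, x i ≤ 1} := by
      ext x; simp [Δstd]
    rw [this]
    refine IsClosed.inter (isClosed_iInter fun i => isClosed_le (by fun_prop) (by fun_prop))
      (isClosed_le (by fun_prop) (by fun_prop))
  · refine (Metric.isBounded_closedBall (x := (0 : Euc d)) (r := 1)).subset ?_
    rintro x ⟨h0, h1⟩
    rw [mem_closedBall_zero_iff, EuclideanSpace.norm_eq, Real.sqrt_le_one]
    refine le_trans (Finset.sum_le_sum fun i _ => ?_) h1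
    have : x i ≤ 1 := (Finset.single_le_sum (fun j _ => h0 j) (Finset.mem_univ i)).trans h1
    rw [Real.norm_eq_abs, sq_abs]
    nlinarith [h0 i]

/-- contraction towards the barycenter -/
def auxW (d : ℕ) : Euc d := WithLp.toLp 2 (fun _ => 1 / ((d : ℝ) + 1))

lemma aux_mem (d : ℕ) (s : ℝ) (hs0 : 0 ≤ s) (hs : s ≤ 1 / 2) (x : Euc d) (hx : x ∈ Δstd d) :
    s • x + (1 - s) • auxW d ∈ Δstd d ∧
      (1 / (2 * ((d : ℝ) + 1))) ^ (d + 1) ≤ elemBubble d (s • x + (1 - s) • auxW d) := by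
  obtain ⟨h0, h1⟩ := hx
  have hd : (0 : ℝ) < (d : ℝ) + 1 := by positivity
  set β : ℝ := 1 / (2 * ((d : ℝ) + 1)) with hβ
  have hβ0 : 0 < β := by positivity
  have hβ2 : 1 / ((d : ℝ) + 1) = 2 * β := by rw [hβ]; field_simp
  have hβd : 2 * β * d = 1 - 2 * β := by rw [hβ]; field_simp; ring
  have hc : ∀ i, (s • x + (1 - s) • auxW d) i = s * x i + (1 - s) * (2 * β) := by
    intro i
    simp [auxW, ← hβ2]
  have hl : ∀ i, β ≤ (s • x + (1 - s) • auxW d) i := by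
    intro i
    rw [hc]
    nlinarith [mul_nonneg hs0 (h0 i)]
  have hsum : ∑ i, (s • x + (1 - s) • auxW d) i = s * ∑ i, x i + (1 - s) * (1 - 2 * β) := by
    simp only [hc, Finset.sum_add_distrib, ← Finset.mul_sum]
    simp only [Finset.sum_const, Finset.card_univ, Fintype.card_fin, nsmul_eq_mul]
    rw [← hβd]; ring
  have hl0 : β ≤ 1 - ∑ i, (s • x + (1 - s) • auxW d) i := by
    rw [hsum]
    nlinarith [mul_nonneg hs0 (sub_nonneg.2 h1)]
  refine ⟨⟨fun i => hβ0.le.trans (hl i), by linarith⟩, ?_⟩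
  unfold elemBubble
  rw [pow_succ']
  refine mul_le_mul hl0 ?_ (by positivity) (hβ0.le.trans hl0)
  have := Finset.prod_le_prod (s := Finset.univ) (f := fun _ : Fin d => β)
    (g := fun i => (s • x + (1 - s) • auxW d) i) (fun _ _ => hβ0.le) (fun i _ => hl i)
  simpa using this

/-- element-bubble norm equivalence on the standard simplex.
There is `c > 0` depending only on `d` such that `∫_Δ v² ≤ c ∫_Δ b v²`
for every affine `v`. -/
theorem elemBubble_L2_equivalence (d : ℕ) (hd : 1 ≤ d) :
    ∃ c : ℝ, 0 < c ∧ ∀ v : Euc d →ᵃ[ℝ] ℝ,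
      (∫ x in Δstd d, (v x) ^ 2) ≤ c * ∫ x in Δstd d, elemBubble d x * (v x) ^ 2 := by
  set β : ℝ := (1 / (2 * ((d : ℝ) + 1))) ^ (d + 1) with hβ
  have hβ0 : 0 < β := by positivity
  refine ⟨(18 * 2 ^ d + 8 * 4 ^ d) / β, by positivity, fun v => ?_⟩
  have hΔ := aux_isCompact d
  have hv : Continuous v := v.continuous_of_finiteDimensional
  set F : Euc d → ℝ := (Δstd d).indicator (fun x => elemBubble d x * (v x) ^ 2) with hF
  have hcb : Continuous (elemBubble d) := by unfold elemBubble; fun_prop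
  have hFi : Integrable F := by
    rw [hF, integrable_indicator_iff hΔ.measurableSet]
    exact (by fun_prop : Continuous fun x => elemBubble d x * (v x) ^ 2).continuousOn.integrableOn_compact hΔ
  have hF0 : ∀ x, 0 ≤ F x := by
    intro x
    refine indicator_nonneg (fun y hy => ?_) x
    refine mul_nonneg (mul_nonneg (by linarith [hy.2]) (Finset.prod_nonneg fun i _ => hy.1 i)) (sq_nonneg _)
  have hcomp : ∀ s : ℝ, s ≠ 0 → ∀ w : Euc d, Integrable fun x => F (s • x + w) := by
    intro s hs w
    exact (hFi.comp_add_right w).comp_smul hs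
  have hint : ∀ s : ℝ, 0 < s → ∀ w : Euc d, ∫ x, F (s • x + w) = (s⁻¹) ^ d * ∫ x, F x := by
    intro s hs w
    rw [Measure.integral_comp_smul volume (fun x => F (x + w)) s, integral_add_right_eq_self]
    simp [abs_of_pos hs]
  rw [← integral_indicator hΔ.measurableSet, ← integral_indicator hΔ.measurableSet, ← hF]
  set ψ : ℝ → Euc d → Euc d := fun s x => s • x + (1 - s) • auxW d with hψ
  have key : ∀ x, (Δstd d).indicator (fun x => (v x) ^ 2) x ≤
      18 / β * F (ψ (1/2) x) + 8 / β * F (ψ (1/4) x) := by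
    intro x
    by_cases hx : x ∈ Δstd d
    · obtain ⟨a1, a2⟩ := aux_mem d (1/2) (by norm_num) (by norm_num) x hx
      obtain ⟨b1, b2⟩ := aux_mem d (1/4) (by norm_num) (by norm_num) x hx
      have e : ∀ s, v (ψ s x) = s * v x + (1 - s) * v (auxW d) := by
        intro s
        have h1 : ψ s x = AffineMap.lineMap (auxW d) x s := by
          simp only [hψ, AffineMap.lineMap_apply_module]; abel
        rw [h1, AffineMap.apply_lineMap, AffineMap.lineMap_apply_module]
        simp only [smul_eq_mul]; ring
      have hvx : v x = 3 * v (ψ (1/2) x) - 2 * v (ψ (1/4) x) := by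
        rw [e, e]; ring
      rw [indicator_of_mem hx]
      have f1 : β * v (ψ (1/2) x) ^ 2 ≤ F (ψ (1/2) x) := by
        rw [hF, indicator_of_mem a1]
        exact mul_le_mul_of_nonneg_right a2 (sq_nonneg _)
      have f2 : β * v (ψ (1/4) x) ^ 2 ≤ F (ψ (1/4) x) := by
        rw [hF, indicator_of_mem b1]
        exact mul_le_mul_of_nonneg_right b2 (sq_nonneg _)
      have g : 18 / β * F (ψ (1/2) x) + 8 / β * F (ψ (1/4) x)
          = (18 * F (ψ (1/2) x) + 8 * F (ψ (1/4) x)) / β := by ring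
      rw [g, le_div_iff₀ hβ0, hvx]
      nlinarith [mul_nonneg hβ0.le (sq_nonneg (3 * v (ψ (1/2) x) + 2 * v (ψ (1/4) x)))]
    · rw [indicator_of_notMem hx]
      have := hF0 (ψ (1/2) x)
      have := hF0 (ψ (1/4) x)
      positivity
  have i1 := (hcomp (1/2) (by norm_num) ((1 - 1/2 : ℝ) • auxW d)).const_mul (18 / β)
  have i2 := (hcomp (1/4) (by norm_num) ((1 - 1/4 : ℝ) • auxW d)).const_mul (8 / β)
  have := integral_mono_of_nonneg
    (Filter.Eventually.of_forall fun x => indicator_nonneg (fun y _ => sq_nonneg (v y)) x)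
    (i1.add i2) (Filter.Eventually.of_forall key)
  refine this.trans (le_of_eq ?_)
  simp only [Pi.add_apply]
  rw [integral_add i1 i2, integral_const_mul, integral_const_mul, hint _ (by norm_num),
    hint _ (by norm_num)]
  norm_num
  ring
end
end

section
/- Let d ≥ 1, κ > 0, and let T ⊂ ℝ^d be a nondegenerate d-simplex (the convex hull of d+1 affinely independent points) with diameter h_T, inradius ρ_T, and shape parameter μ := h_T/ρ_T. Let (λ_z)_{z∈V_T} be the barycentric coordinates of T and b_T := Π_{z∈V_T} λ_z the element bubble. There exists a constant C > 0 depending only on d and μ such that there exist affine functions (ψ_z)_{z∈V_T} for which the functions φ*_z := ψ_z b_T (extended by zero outside T) satisfy ∫_T φ*_z λ_y = δ_{zy} for all vertices y, z of T, together with the robust energy bound ‖φ*_z‖_{E,T} := (∫_T |∇φ*_z|² + κ² ∫_T (φ*_z)²)^{1/2} ≤ C |T|^{−1/2} max{h_T^{−1}, κ}, where |T| denotes the Lebesgue measure of T. -/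
open MeasureTheory Metric Set
open scoped ENNReal RealInnerProductSpace NNReal Classical

noncomputable section

namespace EDB

variable {d : ℕ}

lemma simT_eq (B : AffineBasis (Fin (d+1)) ℝ (Euc d)) :
    simT B = {x | ∀ i, 0 ≤ B.coord i x} := B.convexHull_eq_nonneg_coord

lemma aff_sum (c : Fin (d+1) → ℝ) (f : Fin (d+1) → (Euc d →ᵃ[ℝ] ℝ)) (x : Euc d) :
    (∑ w, c w • f w) x = ∑ w, c w * f w x := by
  induction (Finset.univ : Finset (Fin (d+1))) using Finset.induction_on with
  | empty => simp
  | insert a s ha ih =>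
    rw [Finset.sum_insert ha, Finset.sum_insert ha, AffineMap.coe_add, Pi.add_apply, ih]; simp

lemma simT_compact (B : AffineBasis (Fin (d+1)) ℝ (Euc d)) : IsCompact (simT B) :=
  (Set.finite_range _).isCompact_convexHull (𝕜 := ℝ)

lemma coord_cont (B : AffineBasis (Fin (d+1)) ℝ (Euc d)) (i) : Continuous (B.coord i) :=
  AffineMap.continuous_of_finiteDimensional _

lemma coord_le_one (B : AffineBasis (Fin (d+1)) ℝ (Euc d)) {x} (hx : x ∈ simT B) (i) :
    B.coord i x ≤ 1 := by
  rw [simT_eq] at hx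
  rw [← B.sum_coord_apply_eq_one x]
  exact Finset.single_le_sum (f := fun j => B.coord j x) (fun j _ => hx j) (Finset.mem_univ i)

lemma int_nonempty (B : AffineBasis (Fin (d+1)) ℝ (Euc d)) : (interior (simT B)).Nonempty :=
  ⟨_, B.centroid_mem_interior_convexHull⟩

lemma vol_pos (B : AffineBasis (Fin (d+1)) ℝ (Euc d)) : 0 < (volume (simT B)).toReal :=
  ENNReal.toReal_pos (Measure.measure_pos_of_nonempty_interior _ (int_nonempty B)).ne'
    (simT_compact B).measure_lt_top.ne

/-- change of variables -/
lemma exists_scale (B₀ B : AffineBasis (Fin (d+1)) ℝ (Euc d)) :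
    ∃ D : ℝ, ∀ g : (Fin (d+1) → ℝ) → ℝ,
      ∫ x in simT B, g (fun i => B.coord i x) = D * ∫ x in simT B₀, g (fun i => B₀.coord i x) := by
  let L : Euc d ≃ₗ[ℝ] Euc d := (B₀.basisOf 0).equiv (B.basisOf 0) (Equiv.refl _)
  let f : Euc d →ᵃ[ℝ] Euc d :=
    { toFun := fun x => L (x - B₀ 0) + B 0
      linear := L.toLinearMap
      map_vadd' := by
        intro p v
        simp [add_sub_assoc, add_assoc] }
  have hfv : ∀ i, f (B₀ i) = B i := by
    intro i
    change L (B₀ i - B₀ 0) + B 0 = B i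
    by_cases h : i = 0
    · subst h; simp
    · have h1 := B₀.basisOf_apply 0 ⟨i, h⟩
      have h2 := B.basisOf_apply 0 ⟨i, h⟩
      simp only [vsub_eq_sub] at h1 h2
      rw [← h1]
      simp only [L, Module.Basis.equiv_apply, Equiv.refl_apply]
      rw [h2]; simp
  have hco : ∀ x i, B.coord i (f x) = B₀.coord i x := by
    intro x i
    have h1 := B₀.affineCombination_coord_eq_self x
    have h2 : f x = Finset.univ.affineCombination ℝ B (fun j => B₀.coord j x) := by
      conv_lhs => rw [← h1]
      rw [Finset.map_affineCombination _ _ _ (B₀.sum_coord_apply_eq_one x)]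
      have h3 : (f ∘ B₀ : Fin (d+1) → Euc d) = B := funext hfv
      rw [h3]
    rw [h2, B.coord_apply_combination_of_mem (Finset.mem_univ i) (B₀.sum_coord_apply_eq_one x)]
  have him : f '' simT B₀ = simT B := by
    unfold simT
    rw [AffineMap.image_convexHull, ← Set.range_comp]
    congr 2
    ext1 i
    exact hfv i
  have hinj : Function.Injective f := by
    intro x y h
    apply B₀.ext_elem
    intro i
    rw [← hco, ← hco, h]
  let L' : Euc d →L[ℝ] Euc d := LinearMap.toContinuousLinearMap L.toLinearMap
  have hder : ∀ x, HasFDerivAt f L' x := by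
    intro x
    change HasFDerivAt (fun x => L' (x - B₀ 0) + B 0) L' x
    have := (L'.hasFDerivAt (x := x - B₀ 0)).comp x ((hasFDerivAt_id x).sub_const (B₀ 0))
    simpa using this.add_const (B 0)
  refine ⟨|L'.det|, fun g => ?_⟩
  rw [← him, integral_image_eq_integral_abs_det_fderiv_smul volume
    (simT_compact B₀).measurableSet (fun x _ => (hder x).hasFDerivWithinAt) hinj.injOn]
  simp only [hco, smul_eq_mul]
  rw [integral_const_mul]

lemma scale (B₀ B : AffineBasis (Fin (d+1)) ℝ (Euc d)) (g : (Fin (d+1) → ℝ) → ℝ) :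
      ∫ x in simT B, g (fun i => B.coord i x) =
      (volume (simT B)).toReal / (volume (simT B₀)).toReal *
        ∫ x in simT B₀, g (fun i => B₀.coord i x) := by
  obtain ⟨D, hD⟩ := exists_scale B₀ B
  have h1 := hD (fun _ => 1)
  simp [Measure.real] at h1
  have := (vol_pos B₀).ne'
  rw [hD, h1]
  field_simp

def mass (B : AffineBasis (Fin (d+1)) ℝ (Euc d)) : Matrix (Fin (d+1)) (Fin (d+1)) ℝ :=
  fun z y => ∫ x in simT B, (B.coord z x * ∏ w, B.coord w x) * B.coord y x

lemma contOn_int (B : AffineBasis (Fin (d+1)) ℝ (Euc d)) {f : Euc d → ℝ} (hf : Continuous f) :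
    IntegrableOn f (simT B) := hf.continuousOn.integrableOn_compact (simT_compact B)

lemma mass_det (B : AffineBasis (Fin (d+1)) ℝ (Euc d)) : (mass B).det ≠ 0 := by
  intro h
  obtain ⟨c, hc0, hc⟩ := Matrix.exists_mulVec_eq_zero_iff.mpr h
  apply hc0
  let ψ : Euc d →ᵃ[ℝ] ℝ := ∑ w, c w • B.coord w
  have hψ : ∀ x, ψ x = ∑ w, c w * B.coord w x := by
    intro x
    exact aff_sum _ _ _
  have hcc := coord_cont B
  have hψc : Continuous ψ := AffineMap.continuous_of_finiteDimensional _
  have hI : ∫ x in simT B, (ψ x)^2 * ∏ w, B.coord w x = 0 := by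
    have h1 : ∀ x, (ψ x)^2 * ∏ w, B.coord w x = ∑ z, ∑ y, c z * (c y *
        ((B.coord z x * ∏ w, B.coord w x) * B.coord y x)) := by
      intro x
      rw [hψ, sq, Finset.sum_mul_sum, Finset.sum_mul]
      refine Finset.sum_congr rfl fun z _ => ?_
      rw [Finset.sum_mul]
      refine Finset.sum_congr rfl fun y _ => ?_
      ring
    simp_rw [h1]
    rw [integral_finsetSum _ (fun z _ => contOn_int B (by fun_prop))]
    refine Finset.sum_eq_zero fun z _ => ?_
    rw [integral_finsetSum _ (fun z _ => contOn_int B (by fun_prop))]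
    simp_rw [integral_const_mul]
    rw [← Finset.mul_sum]
    have := congrFun hc z
    simp only [Matrix.mulVec, dotProduct, mass, Pi.zero_apply] at this
    rw [show (∑ y, c y * ∫ x in simT B, (B.coord z x * ∏ w, B.coord w x) * B.coord y x) = 0 by
      rw [← this]; exact Finset.sum_congr rfl fun y _ => mul_comm _ _]
    simp
  rw [setIntegral_eq_zero_iff_of_nonneg_ae] at hI
  · have h2 := Measure.eqOn_open_of_ae_eq (μ := volume) (U := interior (simT B))
      (ae_restrict_of_ae_restrict_of_subset interior_subset hI) isOpen_interior
      (by fun_prop) (by fun_prop)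
    have h3 : ∀ x ∈ interior (simT B), ψ x = 0 := by
      intro x hx
      have h4 := h2 hx
      have h5 : 0 < ∏ w, B.coord w x := by
        unfold simT at hx
        rw [B.interior_convexHull] at hx
        exact Finset.prod_pos fun i _ => hx i
      simpa [h5.ne'] using h4
    obtain ⟨x, hx⟩ := int_nonempty B
    ext z
    have hz : B z ∈ simT B := subset_convexHull _ _ ⟨z, rfl⟩
    have hm := (convex_convexHull ℝ (Set.range B)).combo_interior_self_mem_interior hx hz
      (a := 1/2) (b := 1/2) (by norm_num) (by norm_num) (by norm_num)
    have e0 := h3 x hx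
    have e1 := h3 _ hm
    rw [hψ] at e0 e1
    have e2 : ψ (B z) = 0 := by
      rw [hψ]
      have e3 : ∀ w, B.coord w ((1/2:ℝ) • x + (1/2:ℝ) • B z) =
          1/2 * B.coord w x + 1/2 * B.coord w (B z) := by
        intro w
        have := Convex.combo_affine_apply (f := B.coord w) (x := x) (y := B z)
          (a := (1/2:ℝ)) (b := 1/2) (by norm_num)
        simpa using this
      simp_rw [e3, mul_add, Finset.sum_add_distrib, mul_left_comm _ (1/2:ℝ), ← Finset.mul_sum] at e1
      rw [e0] at e1
      linarith
    rw [hψ] at e2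
    simpa [B.coord_apply] using e2
  · refine (ae_restrict_iff' (simT_compact B).measurableSet).mpr (.of_forall fun x hx => ?_)
    rw [simT_eq] at hx
    exact mul_nonneg (sq_nonneg _) (Finset.prod_nonneg fun i _ => hx i)
  · exact contOn_int B (by fun_prop)

lemma affine_hasFDerivAt (f : Euc d →ᵃ[ℝ] ℝ) (x : Euc d) :
    HasFDerivAt f (LinearMap.toContinuousLinearMap f.linear) x := by
  have h : (f : Euc d → ℝ) = fun x => LinearMap.toContinuousLinearMap f.linear x + f 0 := by
    rw [AffineMap.decomp f]; ext y; simp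
  have h2 := (ContinuousLinearMap.hasFDerivAt (x := x)
    (LinearMap.toContinuousLinearMap f.linear)).add_const (f 0)
  rwa [← h] at h2

lemma grad_bound (B : AffineBasis (Fin (d+1)) ℝ (Euc d)) (i) :
    inradius (simT B) * ‖LinearMap.toContinuousLinearMap (B.coord i).linear‖ ≤ 1 := by
  set l := LinearMap.toContinuousLinearMap (B.coord i).linear with hl
  by_cases h0 : ‖l‖ = 0
  · simp [h0]
  have hpos : 0 < ‖l‖ := lt_of_le_of_ne (norm_nonneg _) (Ne.symm h0)
  rw [← le_div_iff₀ hpos]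
  refine csSup_le ⟨0, 0, by simp⟩ ?_
  rintro r ⟨c, hc⟩
  rcases le_or_gt r 0 with hr | hr
  · exact hr.trans (by positivity)
  have hb : ∀ v ∈ ball (0 : Euc d) r, ‖l v‖ ≤ 1 := by
    intro v hv
    have h1 : c + v ∈ simT B := hc (by simpa using hv)
    have h2 : c ∈ simT B := hc (by simpa using hr)
    have h3 : l v = B.coord i (c + v) - B.coord i c := by
      have := (B.coord i).map_vadd c v
      simp only [vadd_eq_add] at this
      rw [add_comm c v, this]; simp [hl]
    rw [h3, Real.norm_eq_abs, abs_le]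
    have a1 := coord_le_one B h1 i
    have a2 := coord_le_one B h2 i
    rw [simT_eq] at h1 h2
    have a3 := h1 i
    have a4 := h2 i
    constructor <;> linarith
  have hcb : closedBall (0 : Euc d) r ⊆ {v | ‖l v‖ ≤ 1} := by
    rw [← closure_ball _ hr.ne']
    exact closure_minimal hb (isClosed_le (by fun_prop) (by fun_prop))
  have hb' : ∀ v ∈ closedBall (0 : Euc d) r, ‖l.toLinearMap v‖ ≤ 1 := hcb
  have : ‖l‖ ≤ 1 / r := by
    refine ContinuousLinearMap.opNorm_le_of_ball hr (by positivity) fun z _ => ?_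
    simpa using LinearMap.bound_of_ball_bound' hr 1 l.toLinearMap hb' z
  rw [le_div_iff₀ hr] at this
  rw [le_div_iff₀ hpos]; linarith

lemma prod_der {ι : Type*} (s : Finset ι) (f : ι → Euc d → ℝ) (f' : ι → Euc d →L[ℝ] ℝ) (x : Euc d)
    {G : ℝ} (h : ∀ i, HasFDerivAt (f i) (f' i) x) (hG : ∀ i, ‖f' i‖ ≤ G)
    (h1 : ∀ i, |f i x| ≤ 1) :
    ∃ p : Euc d →L[ℝ] ℝ, HasFDerivAt (fun x => ∏ i ∈ s, f i x) p x ∧ ‖p‖ ≤ s.card * G ∧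
      |∏ i ∈ s, f i x| ≤ 1 := by
  induction s using Finset.induction_on with
  | empty => exact ⟨0, by simpa using hasFDerivAt_const (1:ℝ) x, by simp, by simp⟩
  | insert a s ha ih =>
    obtain ⟨p, hp, hn, hb⟩ := ih
    refine ⟨_, by simpa only [Finset.prod_insert ha] using (h a).fun_mul hp, ?_, ?_⟩
    · refine (norm_add_le _ _).trans ?_
      rw [norm_smul, norm_smul, Finset.card_insert_of_notMem ha, Real.norm_eq_abs, Real.norm_eq_abs]
      have e1 := mul_le_mul (h1 a) hn (norm_nonneg _) zero_le_one
      have e2 := mul_le_mul hb (hG a) (norm_nonneg _) zero_le_one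
      push_cast; linarith
    · rw [Finset.prod_insert ha, abs_mul]
      exact mul_le_one₀ (h1 a) (abs_nonneg _) hb

lemma norm_gradient (f : Euc d → ℝ) (f' : Euc d →L[ℝ] ℝ) (x) (h : HasFDerivAt f f' x) :
    ‖gradient f x‖ = ‖f'‖ := by
  rw [gradient, h.fderiv]; simp

/-- the energy bound -/
lemma energy_bound (hd : 1 ≤ d) (μ κ : ℝ) (hκ : 0 < κ) (B : AffineBasis (Fin (d+1)) ℝ (Euc d))
    (hμ : Metric.diam (simT B) ≤ μ * inradius (simT B)) (a : Fin (d+1) → ℝ) (A : ℝ)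
    (hA : ∑ w, |a w| ≤ A / (volume (simT B)).toReal) (ψ : Euc d →ᵃ[ℝ] ℝ)
    (hψ : ψ = ∑ w, a w • B.coord w) :
    Real.sqrt (energySq κ (simT B) (fun x => ψ x * ∏ w, B.coord w x))
      ≤ (A * (|μ| * (d + 2) + 1)) * (volume (simT B)).toReal ^ (-(1 / 2 : ℝ))
                * max (Metric.diam (simT B))⁻¹ κ := by
  set V := (volume (simT B)).toReal with hV
  have hVpos : 0 < V := vol_pos B
  set h := Metric.diam (simT B) with hh
  have hA0 : 0 ≤ A := by
    have : 0 ≤ A / V := (Finset.sum_nonneg fun _ _ => abs_nonneg _).trans hA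
    have := mul_nonneg this hVpos.le
    rwa [div_mul_cancel₀ _ hVpos.ne'] at this
  have hpos : 0 < h := by
    have hne : B 0 ≠ B ⟨1, by omega⟩ := fun e => by
      have := B.ind.injective e
      simp [Fin.ext_iff] at this
    have := Metric.dist_le_diam_of_mem (simT_compact B).isBounded
      (subset_convexHull ℝ _ ⟨0, rfl⟩ : B 0 ∈ simT B)
      (subset_convexHull ℝ _ ⟨⟨1, by omega⟩, rfl⟩ : B ⟨1, by omega⟩ ∈ simT B)
    exact (dist_pos.mpr hne).trans_le this
  have hρ : 0 ≤ inradius (simT B) := Real.sSup_nonneg' ⟨0, ⟨0, by simp⟩, le_rfl⟩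
  set G := |μ| / h with hG
  have hG0 : 0 ≤ G := by positivity
  have hlam : ∀ i, ‖LinearMap.toContinuousLinearMap (B.coord i).linear‖ ≤ G := by
    intro i
    rw [hG, le_div_iff₀ hpos]
    have h1 := grad_bound B i
    set n := ‖LinearMap.toContinuousLinearMap (B.coord i).linear‖
    have hn : 0 ≤ n := norm_nonneg _
    calc n * h ≤ n * (|μ| * inradius (simT B)) := by
          gcongr
          exact hμ.trans (by gcongr; exact le_abs_self _)
      _ = |μ| * (inradius (simT B) * n) := by ring
      _ ≤ |μ| * 1 := by gcongr
      _ = |μ| := mul_one _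
  have habs : ∀ x ∈ simT B, ∀ i, |B.coord i x| ≤ 1 := by
    intro x hx i
    have h1 := coord_le_one B hx i
    rw [simT_eq] at hx
    rw [abs_of_nonneg (hx i)]; exact h1
  have hψx : ∀ x ∈ simT B, |ψ x| ≤ A / V := by
    intro x hx
    have : ψ x = ∑ w, a w * B.coord w x := by rw [hψ]; exact aff_sum _ _ _
    rw [this]
    refine (Finset.abs_sum_le_sum_abs _ _).trans (le_trans ?_ hA)
    refine Finset.sum_le_sum fun w _ => ?_
    rw [abs_mul]
    exact mul_le_of_le_one_right (abs_nonneg _) (habs x hx w)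
  have hψd : ∀ x, ∃ p : Euc d →L[ℝ] ℝ, HasFDerivAt ψ p x ∧ ‖p‖ ≤ A / V * G := by
    intro x
    refine ⟨∑ w, a w • LinearMap.toContinuousLinearMap (B.coord w).linear, ?_, ?_⟩
    · have e : (ψ : Euc d → ℝ) = fun x => ∑ w, a w * B.coord w x := by
        ext x; rw [hψ]; exact aff_sum _ _ _
      rw [e]
      exact HasFDerivAt.fun_sum fun w _ => (affine_hasFDerivAt (B.coord w) x).const_mul (a w)
    · refine (norm_sum_le _ _).trans ?_
      refine le_trans ?_ (mul_le_mul_of_nonneg_right hA hG0)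
      rw [Finset.sum_mul]
      refine Finset.sum_le_sum fun w _ => ?_
      rw [norm_smul, Real.norm_eq_abs]
      exact mul_le_mul_of_nonneg_left (hlam w) (abs_nonneg _)
  have hpt : ∀ x ∈ simT B, |ψ x * ∏ w, B.coord w x| ≤ A / V ∧
      ‖gradient (fun x => ψ x * ∏ w, B.coord w x) x‖ ≤ A / V * ((d + 2) * G) := by
    intro x hx
    obtain ⟨p, hp, hpn⟩ := hψd x
    obtain ⟨q, hq, hqn, hq1⟩ := prod_der Finset.univ (fun w => B.coord w) _ x
      (fun i => affine_hasFDerivAt (B.coord i) x) hlam (habs x hx)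
    constructor
    · rw [abs_mul]
      exact (mul_le_of_le_one_right (abs_nonneg _) hq1).trans (hψx x hx)
    · rw [norm_gradient _ _ x (hp.fun_mul hq)]
      refine (norm_add_le _ _).trans ?_
      rw [norm_smul, norm_smul, Real.norm_eq_abs, Real.norm_eq_abs]
      have hAV : 0 ≤ A / V := by positivity
      have e1 := mul_le_mul (hψx x hx) hqn (norm_nonneg _) hAV
      have e2 := mul_le_mul hq1 hpn (norm_nonneg _) zero_le_one
      simp only [Finset.card_univ, Fintype.card_fin] at e1
      push_cast at e1
      linarith
  have hfin : volume (simT B) < ⊤ := (simT_compact B).measure_lt_top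
  have hAV : 0 ≤ A / V := by positivity
  set M := max h⁻¹ κ with hM
  have hM0 : 0 ≤ M := le_max_of_le_right hκ.le
  have I1 : gradSq (simT B) (fun x => ψ x * ∏ w, B.coord w x)
      ≤ (A / V * ((d + 2) * G))^2 * V := by
    unfold gradSq
    have hVV : volume.real (simT B) = V := rfl
    rw [← hVV]
    refine (le_abs_self _).trans ?_
    rw [← Real.norm_eq_abs]
    refine norm_setIntegral_le_of_norm_le_const hfin fun x hx => ?_
    rw [Real.norm_eq_abs, abs_of_nonneg (sq_nonneg _)]
    exact pow_le_pow_left₀ (norm_nonneg _) (hpt x hx).2 2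
  have I2 : sqIntg (simT B) (fun x => ψ x * ∏ w, B.coord w x) ≤ (A / V)^2 * V := by
    unfold sqIntg
    have hVV : volume.real (simT B) = V := rfl
    rw [← hVV]
    refine (le_abs_self _).trans ?_
    rw [← Real.norm_eq_abs]
    refine norm_setIntegral_le_of_norm_le_const hfin fun x hx => ?_
    rw [Real.norm_eq_abs, abs_of_nonneg (sq_nonneg _), ← sq_abs]
    exact pow_le_pow_left₀ (abs_nonneg _) (hpt x hx).1 2
  have hGM : G ≤ |μ| * M := by
    rw [hG, div_eq_mul_inv]; gcongr; exact le_max_left _ _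
  have hκM : κ ≤ M := le_max_right _ _
  have hVr : (V ^ (-(1 / 2 : ℝ)))^2 = V⁻¹ := by
    rw [← Real.rpow_natCast, ← Real.rpow_mul hVpos.le]; norm_num
    exact Real.rpow_neg_one V
  apply Real.sqrt_le_iff.mpr
  refine ⟨by positivity, ?_⟩
  unfold energySq
  have hE : (A / V)^2 * V = A^2 * V⁻¹ := by field_simp
  calc _ ≤ (A / V * ((d + 2) * G))^2 * V + κ^2 * ((A / V)^2 * V) := by gcongr
    _ = ((A / V)^2 * V) * (((d + 2) * G)^2 + κ^2) := by ring
    _ ≤ ((A / V)^2 * V) * (((d + 2) * (|μ| * M))^2 + M^2) := by gcongr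
    _ ≤ ((A / V)^2 * V) * ((|μ| * (d + 2) + 1) * M)^2 := by
        gcongr
        have : 0 ≤ 2 * (|μ| * (d+2)) * M^2 := by positivity
        nlinarith
    _ = _ := by
        rw [hE, mul_pow, mul_pow, mul_pow, mul_pow, hVr]; ring

end EDB

/-- the element dual basis on a general simplex: bi-orthogonality and
robust energy bound. -/
theorem element_dual_basis_robust (d : ℕ) (hd : 1 ≤ d) (μ : ℝ) :
    ∃ C : ℝ, 0 < C ∧ ∀ κ : ℝ, 0 < κ →
      ∀ B : AffineBasis (Fin (d + 1)) ℝ (Euc d),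
        Metric.diam (simT B) ≤ μ * inradius (simT B) →
        ∃ ψ : Fin (d + 1) → (Euc d →ᵃ[ℝ] ℝ), ∀ z : Fin (d + 1),
          (∀ y : Fin (d + 1),
            (∫ x in simT B, (ψ z x * ∏ w, B.coord w x) * B.coord y x)
              = if z = y then 1 else 0) ∧
          Real.sqrt (energySq κ (simT B) (fun x => ψ z x * ∏ w, B.coord w x))
            ≤ C * (volume (simT B)).toReal ^ (-(1 / 2 : ℝ))
                * max (Metric.diam (simT B))⁻¹ κ := by
  by_cases hne : Nonempty (AffineBasis (Fin (d + 1)) ℝ (Euc d))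
  swap
  · exact ⟨1, one_pos, fun κ _ B => (hne ⟨B⟩).elim⟩
  obtain ⟨B₀⟩ := hne
  set V₀ := (volume (simT B₀)).toReal with hV₀
  have hV₀pos : 0 < V₀ := EDB.vol_pos B₀
  obtain ⟨N, hNM⟩ : ∃ N, N * EDB.mass B₀ = 1 :=
    ⟨_, Matrix.nonsing_inv_mul _ (isUnit_iff_ne_zero.mpr (EDB.mass_det B₀))⟩
  set A := V₀ * (∑ z, ∑ w, |N z w|) + 1 with hA
  have hApos : 0 < A := by positivity
  refine ⟨A * (|μ| * (d + 2) + 1), by positivity, fun κ hκ B hB => ?_⟩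
  set V := (volume (simT B)).toReal with hV
  have hVpos : 0 < V := EDB.vol_pos B
  refine ⟨fun z => ∑ w, (N z w * (V₀ / V)) • B.coord w, fun z => ⟨fun y => ?_, ?_⟩⟩
  · have hcc := EDB.coord_cont B
    have h1 : ∀ x, ((∑ w, (N z w * (V₀ / V)) • B.coord w : Euc d →ᵃ[ℝ] ℝ) x
        * ∏ w, B.coord w x) * B.coord y x
        = ∑ w, (N z w * (V₀ / V)) * ((B.coord w x * ∏ w, B.coord w x) * B.coord y x) := by
      intro x
      have : (∑ w, (N z w * (V₀ / V)) • B.coord w : Euc d →ᵃ[ℝ] ℝ) x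
        = ∑ w, (N z w * (V₀ / V)) * B.coord w x := EDB.aff_sum (fun w => N z w * (V₀ / V)) _ x
      rw [this, Finset.sum_mul, Finset.sum_mul]
      exact Finset.sum_congr rfl fun w _ => by ring
    simp_rw [h1]
    rw [integral_finsetSum _ (fun z _ => EDB.contOn_int B (by fun_prop))]
    simp_rw [integral_const_mul]
    have h2 : ∀ w, ∫ x in simT B, (B.coord w x * ∏ w, B.coord w x) * B.coord y x
        = V / V₀ * EDB.mass B₀ w y := fun w =>
      EDB.scale B₀ B (fun c => (c w * ∏ i, c i) * c y)
    simp_rw [h2]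
    have h3 := congrFun (congrFun hNM z) y
    rw [Matrix.mul_apply, Matrix.one_apply] at h3
    rw [← h3]
    refine Finset.sum_congr rfl fun w _ => ?_
    field_simp
  · refine EDB.energy_bound hd μ κ hκ B hB (fun w => N z w * (V₀ / V)) A ?_ _ rfl
    have h0 : ∑ w, |N z w| ≤ ∑ z, ∑ w, |N z w| :=
      Finset.single_le_sum (f := fun z => ∑ w, |N z w|)
        (fun _ _ => Finset.sum_nonneg fun _ _ => abs_nonneg _) (Finset.mem_univ z)
    simp_rw [abs_mul, abs_of_pos (div_pos hV₀pos hVpos)]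
    rw [← Finset.sum_mul, ← hV, le_div_iff₀ hVpos, mul_assoc, div_mul_cancel₀ _ hVpos.ne', hA]
    nlinarith
end
end

section
/- Let d ≥ 1, κ > 0, let ω ⊂ ℝ^d be a bounded open set, and let T ⊆ ω be a nondegenerate d-simplex with barycentric coordinate λ (associated with one of its vertices). Assume the Friedrichs inequality on ω with constant C_F: for every φ ∈ T(ω), ‖φ‖_{L²(ω)} ≤ C_F · diam(ω) · ‖∇φ‖_{L²(ω)}. Then for every φ ∈ T(ω): ∫_T λ φ ≤ |T|^{1/2} · min{κ^{−1}, C_F diam(ω)} · ‖φ‖_{E,ω}. -/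
open MeasureTheory Metric Set
open scoped ENNReal RealInnerProductSpace NNReal Classical

noncomputable section

/-- robust bound for testing a barycentric coordinate, used for the
local stability of the bi-orthogonal system. If the Friedrichs inequality holds on `ω`
with constant `C_F`, `T ⊆ ω` is a nondegenerate simplex and `λ = B.coord z` one of its
barycentric coordinates, then for every `φ ∈ T(ω)`:
`∫_T λ φ ≤ |T|^{1/2} min{κ⁻¹, C_F diam ω} ‖φ‖_{E,ω}`. -/
theorem nodal_functional_robust_bound
    (d : ℕ) (hd : 1 ≤ d) (κ : ℝ) (hκ : 0 < κ)
    (ω : Set (Euc d)) (hω : IsOpen ω) (hbdd : Bornology.IsBounded ω)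
    (B : AffineBasis (Fin (d + 1)) ℝ (Euc d)) (hTω : simT B ⊆ ω)
    (z : Fin (d + 1)) (CF : ℝ)
    (hFried : ∀ φ : Euc d → ℝ, IsTest ω φ →
      Real.sqrt (sqIntg ω φ) ≤ CF * Metric.diam ω * Real.sqrt (gradSq ω φ)) :
    ∀ φ : Euc d → ℝ, IsTest ω φ →
      (∫ x in simT B, B.coord z x * φ x)
        ≤ Real.sqrt (volume (simT B)).toReal * min κ⁻¹ (CF * Metric.diam ω)
            * Real.sqrt (energySq κ ω φ) := by
  intro φ hφ
  have hfr := hFried φ hφ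
  obtain ⟨⟨L, hL⟩, h0⟩ := hφ
  have hc : Continuous φ := hL.continuous
  have hTc : IsCompact (simT B) := (Set.finite_range B).isCompact_convexHull ℝ
  have hTm : MeasurableSet (simT B) := hTc.isClosed.measurableSet
  have hgn : 0 ≤ gradSq ω φ := integral_nonneg (fun x => by positivity)
  have hsn : 0 ≤ sqIntg ω φ := integral_nonneg (fun x => by positivity)
  have hcoord : Continuous (B.coord z) := continuous_barycentric_coord B z
  have hωi : IntegrableOn (fun x => (φ x) ^ 2) ω := by
    have h1 : IntegrableOn (fun x => (φ x) ^ 2) (closure ω) :=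
      (hc.pow 2).continuousOn.integrableOn_compact hbdd.isCompact_closure
    exact h1.mono_set subset_closure
  have hsub : ∫ x in simT B, (φ x) ^ 2 ≤ sqIntg ω φ :=
    setIntegral_mono_set hωi (ae_of_all _ fun x => by positivity)
      (HasSubset.Subset.eventuallyLE hTω)
  have hle : (∫ x in simT B, B.coord z x * φ x) ≤ ∫ x in simT B, |φ x| * 1 := by
    refine setIntegral_mono_on ?_ ?_ hTm ?_
    · exact (hcoord.mul hc).continuousOn.integrableOn_compact hTc
    · exact (hc.abs.mul continuous_const).continuousOn.integrableOn_compact hTc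
    · intro x hx
      have hx' : ∀ i, 0 ≤ B.coord i x := by
        have := hx
        rw [simT, B.convexHull_eq_nonneg_coord] at this
        exact this
      have h1 : B.coord z x ≤ 1 := by
        rw [← B.sum_coord_apply_eq_one x]
        exact Finset.single_le_sum (fun i _ => hx' i) (Finset.mem_univ z)
      calc B.coord z x * φ x ≤ B.coord z x * |φ x| :=
            mul_le_mul_of_nonneg_left (le_abs_self _) (hx' z)
        _ ≤ 1 * |φ x| := mul_le_mul_of_nonneg_right h1 (abs_nonneg _)
        _ = |φ x| * 1 := by ring
  have : IsFiniteMeasure (volume.restrict (simT B)) :=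
    ⟨by rw [Measure.restrict_apply_univ]; exact hTc.measure_lt_top⟩
  have hCS : (∫ x in simT B, |φ x| * 1) ≤
      Real.sqrt (∫ x in simT B, (φ x) ^ 2) * Real.sqrt (volume (simT B)).toReal := by
    have hm : MemLp (fun x => |φ x|) (ENNReal.ofReal 2) (volume.restrict (simT B)) := by
      have : ENNReal.ofReal 2 = 2 := by norm_num
      rw [this, memLp_two_iff_integrable_sq hc.abs.aestronglyMeasurable]
      simp only [sq_abs]
      exact hωi.mono_set hTω
    have h := integral_mul_le_Lp_mul_Lq_of_nonneg (μ := volume.restrict (simT B))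
      (f := fun x => |φ x|) (g := fun _ => (1 : ℝ)) Real.HolderConjugate.two_two
      (ae_of_all _ fun x => abs_nonneg _) (ae_of_all _ fun x => zero_le_one)
      hm (memLp_const 1)
    rw [Real.sqrt_eq_rpow, Real.sqrt_eq_rpow]
    simpa [Measure.real] using h
  set a := Real.sqrt (sqIntg ω φ) with ha
  set g := Real.sqrt (gradSq ω φ) with hg
  set E := Real.sqrt (energySq κ ω φ) with hE
  have ha0 : 0 ≤ a := Real.sqrt_nonneg _
  have hg0 : 0 ≤ g := Real.sqrt_nonneg _
  have hE0 : 0 ≤ E := Real.sqrt_nonneg _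
  have ha2 : a ^ 2 = sqIntg ω φ := Real.sq_sqrt hsn
  have hg2 : g ^ 2 = gradSq ω φ := Real.sq_sqrt hgn
  have hE2 : E ^ 2 = g ^ 2 + κ ^ 2 * a ^ 2 := by
    rw [ha2, hg2]
    exact Real.sq_sqrt (by unfold energySq; positivity)
  have key : a ≤ min κ⁻¹ (CF * Metric.diam ω) * E := by
    rcases min_cases κ⁻¹ (CF * Metric.diam ω) with ⟨h, _⟩ | ⟨h, _⟩ <;> rw [h]
    · rw [inv_mul_eq_div, le_div_iff₀ hκ]
      exact le_trans (le_abs_self _) (abs_le_of_sq_le_sq (by nlinarith [sq_nonneg g]) hE0)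
    · rcases le_or_gt 0 (CF * Metric.diam ω) with hp | hn
      · refine hfr.trans (mul_le_mul_of_nonneg_left ?_ hp)
        exact le_trans (le_abs_self _) (abs_le_of_sq_le_sq (by nlinarith [mul_nonneg (sq_nonneg κ) (sq_nonneg a)]) hE0)
      · have hgz : g = 0 := by nlinarith
        have haz : a = 0 := by rw [hgz] at hfr; linarith
        have hEz : E = 0 := by
          rw [hgz, haz] at hE2
          exact pow_eq_zero_iff two_ne_zero |>.1 (by linarith)
        rw [haz, hEz]; simp
  calc (∫ x in simT B, B.coord z x * φ x) ≤ _ := hle.trans hCS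
    _ ≤ a * Real.sqrt (volume (simT B)).toReal :=
        mul_le_mul_of_nonneg_right (Real.sqrt_le_sqrt hsub) (Real.sqrt_nonneg _)
    _ ≤ (min κ⁻¹ (CF * Metric.diam ω) * E) * Real.sqrt (volume (simT B)).toReal :=
        mul_le_mul_of_nonneg_right key (Real.sqrt_nonneg _)
    _ = _ := by ring
end
end

section
/- Let d ≥ 2, κ > 0, and let T ⊂ ℝ^d be a nondegenerate d-simplex with diameter h_T, shape parameter μ := h_T/ρ_T (ρ_T the inradius), and two distinct faces F and F' (a face is the convex hull of d of the vertices). There exists a constant C > 0 depending only on d and μ such that for every Lipschitz function φ : ℝ^d → ℝ vanishing identically on F': ∫_F φ dH^{d−1} ≤ C |F|^{1/2} min{h_T, κ^{−1}}^{1/2} ‖φ‖_{E,int T}, where |F| := H^{d−1}(F) and ‖φ‖_{E,int T}² := ∫_T |∇φ|² + κ² ∫_T φ². -/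
open MeasureTheory Metric Set
open scoped ENNReal RealInnerProductSpace NNReal Classical

noncomputable section

def Kc {m : ℕ} (t : ℝ) (w : Euc m) : Euc (m+1) := WithLp.toLp 2 (Fin.cons t w.ofLp)

lemma pfs_eq {m : ℕ} (t : ℝ) (w : Fin m → ℝ) :
    (MeasurableEquiv.piFinSuccAbove (fun _ : Fin (m+1) => ℝ) 0).symm (t, w)
      = (Fin.cons t w : Fin (m+1) → ℝ) := by
  ext i
  simp [MeasurableEquiv.piFinSuccAbove]

lemma measurable_Kc {m : ℕ} : Measurable (fun p : ℝ × Euc m => Kc p.1 p.2) := by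
  unfold Kc
  have h2 : Measurable (fun p : ℝ × Euc m => (MeasurableEquiv.piFinSuccAbove (fun _ : Fin (m+1) => ℝ) 0).symm (p.1, p.2.ofLp)) := by fun_prop
  simp_rw [pfs_eq] at h2
  exact (WithLp.measurable_toLp 2 _).comp h2

lemma lintegral_Kc {m : ℕ} (f : Euc (m+1) → ℝ≥0∞) (hf : Measurable f) :
    ∫⁻ y, f y = ∫⁻ w : Euc m, ∫⁻ t : ℝ, f (Kc t w) := by
  rw [← (PiLp.volume_preserving_toLp (Fin (m+1))).lintegral_comp hf]
  have h1 := (volume_preserving_piFinSuccAbove (fun _ : Fin (m+1) => ℝ) 0).symm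
  rw [← h1.lintegral_comp (f := fun a => f (WithLp.toLp 2 a)) (by fun_prop)]
  rw [Measure.volume_eq_prod, lintegral_prod_symm' _ (by fun_prop)]
  rw [← (PiLp.volume_preserving_toLp (Fin m)).lintegral_comp]
  · simp_rw [pfs_eq]
    rfl
  · apply Measurable.lintegral_prod_left' (f := fun p : ℝ × Euc m => f (Kc p.1 p.2))
    exact hf.comp measurable_Kc

lemma Kc_add {m : ℕ} (w : Euc m) (t : ℝ) (v : Euc (m+1)) :
    Kc 0 w + t • v = Kc (t * v 0) (w + t • WithLp.toLp 2 (fun i : Fin m => v i.succ)) := by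
  ext i
  refine Fin.cases ?_ (fun j => ?_) i <;> simp [Kc]

lemma lintegral_scale (a : ℝ) (ha : a ≠ 0) (f : ℝ → ℝ≥0∞) (hf : Measurable f) :
    ∫⁻ t, f (t * a) = ENNReal.ofReal |a|⁻¹ * ∫⁻ t, f t := by
  have h := Measure.map_addHaar_smul (volume : Measure ℝ) ha
  have h2 : ∫⁻ t, f t ∂(Measure.map (a • ·) volume) = ∫⁻ t, f (a * t) := by
    rw [lintegral_map hf (by fun_prop)]; rfl
  simp_rw [mul_comm _ a]
  rw [← h2, h, lintegral_smul_measure]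
  simp [abs_inv]

lemma tonelli_slant0 {m : ℕ} (v : Euc (m+1)) (ha : v 0 ≠ 0) (f : Euc (m+1) → ℝ≥0∞)
    (hf : Measurable f) :
    ∫⁻ w : Euc m, ∫⁻ t : ℝ, f (Kc 0 w + t • v) = ENNReal.ofReal |v 0|⁻¹ * ∫⁻ y, f y := by
  have hK := measurable_Kc (m := m)
  have hK' : ∀ (g : Euc m × ℝ → ℝ) (k : Euc m × ℝ → Euc m), Measurable g → Measurable k →
      Measurable (fun p => f (Kc (g p) (k p))) := fun g k hg hk =>
    hf.comp (hK.comp (hg.prodMk hk))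
  simp_rw [Kc_add]
  set u : Euc m := WithLp.toLp 2 (fun i : Fin m => v i.succ)
  rw [lintegral_lintegral_swap]
  · rw [lintegral_congr fun t : ℝ => lintegral_add_right_eq_self (fun w => f (Kc (t * v 0) w)) (t • u)]
    rw [lintegral_lintegral_swap]
    · rw [lintegral_Kc f hf, ← lintegral_const_mul]
      · refine lintegral_congr fun w => ?_
        exact lintegral_scale (v 0) ha (fun t => f (Kc t w))
          (hf.comp (hK.comp (f := fun t : ℝ => (t, w)) (by fun_prop)))
      · exact Measurable.lintegral_prod_right' (f := fun p : Euc m × ℝ => f (Kc p.2 p.1)) (hK' _ _ (by fun_prop) (by fun_prop))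
    · exact (hf.comp (hK.comp (f := fun p : ℝ × Euc m => (p.1 * v 0, p.2)) (by fun_prop))).aemeasurable
  · exact (hK' (fun p => p.2 * v 0) (fun p => p.1 + p.2 • u) (by fun_prop) (by fun_prop)).aemeasurable

lemma tonelli_slant {m : ℕ} (b : OrthonormalBasis (Fin (m+1)) ℝ (Euc (m+1))) (p v : Euc (m+1))
    (ha : b.repr v 0 ≠ 0) (f : Euc (m+1) → ℝ≥0∞) (hf : Measurable f) :
    ∫⁻ w : Euc m, ∫⁻ t : ℝ, f (p + b.repr.symm (Kc 0 w) + t • v)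
      = ENNReal.ofReal |b.repr v 0|⁻¹ * ∫⁻ y, f y := by
  have hm : Measurable b.repr.symm := b.repr.symm.continuous.measurable
  have h := tonelli_slant0 (b.repr v) ha (fun y => f (p + b.repr.symm y)) (by fun_prop)
  have e : ∫⁻ y, f (p + b.repr.symm y) = ∫⁻ y, f y := by
    rw [b.measurePreserving_repr_symm.lintegral_comp (f := fun y => f (p + y)) (by fun_prop)]
    exact lintegral_add_left_eq_self f p
  rw [e] at h
  rw [← h]
  simp [add_assoc]

lemma line_est {n : ℕ} (φ : Euc n → ℝ) (L : ℝ≥0) (hL : LipschitzWith L φ) (x v : Euc n)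
    (s h κ : ℝ) (hs0 : 0 ≤ s) (hs1 : s ≤ 1) (hv : ‖v‖ ≤ h) (hκ : 0 < κ)
    (hz : φ (x + s • v) = 0) (hd : ∀ᵐ t : ℝ, DifferentiableAt ℝ φ (x + t • v)) :
    ENNReal.ofReal (φ x ^ 2) ≤ ENNReal.ofReal (h * min h κ⁻¹) *
      ∫⁻ t in Ioc 0 s, ENNReal.ofReal (‖gradient φ (x + t • v)‖ ^ 2
        + κ ^ 2 * φ (x + t • v) ^ 2) := by
  have hh : 0 ≤ h := (norm_nonneg v).trans hv
  set ψ : ℝ → ℝ := fun t => φ (x + t • v) with hψ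
  set N : ℝ → ℝ := fun t => ‖gradient φ (x + t • v)‖ with hN
  have hNm : Measurable N := by
    have : Measurable (gradient φ) := by
      unfold gradient
      exact (InnerProductSpace.toDual ℝ (Euc n)).symm.continuous.measurable.comp (measurable_fderiv ℝ φ)
    exact (this.comp (by fun_prop)).norm
  have hNb : ∀ t, N t ≤ L := fun t => by
    simp only [hN, gradient, LinearIsometryEquiv.norm_map]
    exact norm_fderiv_le_of_lipschitz ℝ hL
  have hN0 : ∀ t, 0 ≤ N t := fun t => norm_nonneg _
  have hψL : LipschitzWith (L * ‖v‖₊) ψ := by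
    apply hL.comp
    refine LipschitzWith.of_dist_le_mul fun a b => ?_
    simp [dist_eq_norm, ← sub_smul, norm_smul, mul_comm]
  have hac : AbsolutelyContinuousOnInterval ψ 0 s :=
    (hψL.lipschitzOnWith).absolutelyContinuousOnInterval
  have hder : ∀ᵐ t : ℝ, |deriv ψ t| ≤ h * N t := by
    filter_upwards [hd] with t ht
    have h1 : HasDerivAt ψ (fderiv ℝ φ (x + t • v) v) t := by
      have h2 : HasDerivAt (fun t : ℝ => x + t • v) v t := by
        simpa using ((hasDerivAt_id t).smul_const v).const_add x
      exact ht.hasFDerivAt.comp_hasDerivAt t h2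
    rw [h1.deriv]
    simp only [hN, gradient, LinearIsometryEquiv.norm_map]
    calc _ ≤ ‖fderiv ℝ φ (x + t • v)‖ * ‖v‖ := (fderiv ℝ φ (x + t • v)).le_opNorm v
      _ ≤ _ := by rw [mul_comm]; gcongr
  have hdm : Measurable (deriv ψ) := measurable_deriv ψ
  have hdb : ∀ t, |deriv ψ t| ≤ L * ‖v‖ := fun t => by
    have := norm_deriv_le_of_lipschitz (x₀ := t) hψL
    simpa using this
  have hint : ∀ (f : ℝ → ℝ) (c : ℝ), Measurable f → (∀ t, |f t| ≤ c) →
      IntervalIntegrable f volume 0 s := fun f c hf hc => by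
    rw [intervalIntegrable_iff_integrableOn_Ioc_of_le hs0]
    exact Measure.integrableOn_of_bounded (M := c) (by simp) hf.aestronglyMeasurable
      (Filter.Eventually.of_forall hc)
  have hψc : Continuous ψ := hψL.continuous
  have hNi : IntervalIntegrable (fun t => N t ^ 2) volume 0 s :=
    hint _ (L ^ 2) (by fun_prop) fun t => by
      rw [abs_of_nonneg (by positivity)]; gcongr; exact hNb t
  have hd1 : IntervalIntegrable (deriv ψ) volume 0 s := hint _ _ hdm hdb
  have hd2 : IntervalIntegrable (fun t => deriv ψ t ^ 2) volume 0 s :=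
    hint _ ((L * ‖v‖) ^ 2) (by fun_prop) fun t => by
      rw [abs_of_nonneg (by positivity), ← sq_abs]; gcongr; exact hdb t
  have hψ2 : IntervalIntegrable (fun t => κ ^ 2 * ψ t ^ 2) volume 0 s :=
    Continuous.intervalIntegrable (by fun_prop) _ _
  have hGi : IntervalIntegrable (fun t => N t ^ 2 + κ ^ 2 * ψ t ^ 2) volume 0 s := hNi.add hψ2
  have hψ0 : ψ 0 = φ x := by simp [hψ]
  have hψs : ψ s = 0 := hz
  have e1 : φ x ^ 2 ≤ h * h * ∫ t in 0..s, (N t ^ 2 + κ ^ 2 * ψ t ^ 2) := by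
    have hI : ∫ t in 0..s, deriv ψ t = - φ x := by
      rw [hac.integral_deriv_eq_sub, hψ0, hψs]; ring
    have h0 : 0 ≤ ∫ t in 0..s, (deriv ψ t + φ x) ^ 2 :=
      intervalIntegral.integral_nonneg hs0 fun _ _ => by positivity
    have h1 : ∫ t in 0..s, (deriv ψ t + φ x) ^ 2
        = (∫ t in 0..s, deriv ψ t ^ 2) + 2 * φ x * (- φ x) + s * φ x ^ 2 := by
      rw [← hI, ← intervalIntegral.integral_const_mul, ← intervalIntegral.integral_add hd2 (hd1.const_mul _)]
      have : s * φ x ^ 2 = ∫ t in 0..s, φ x ^ 2 := by simp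
      rw [this, ← intervalIntegral.integral_add (hd2.add (hd1.const_mul _)) (by simp)]
      congr 1; ext t; ring
    have h2 : φ x ^ 2 ≤ ∫ t in 0..s, deriv ψ t ^ 2 := by nlinarith [sq_nonneg (φ x)]
    refine h2.trans ?_
    rw [← intervalIntegral.integral_const_mul]
    refine intervalIntegral.integral_mono_ae hs0 hd2 (hGi.const_mul _) ?_
    filter_upwards [hder] with t ht
    have : deriv ψ t ^ 2 ≤ (h * N t) ^ 2 := by rw [← sq_abs]; gcongr
    have h3 : 0 ≤ h * h * (κ ^ 2 * ψ t ^ 2) := by positivity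
    nlinarith
  have e2 : φ x ^ 2 ≤ h * κ⁻¹ * ∫ t in 0..s, (N t ^ 2 + κ ^ 2 * ψ t ^ 2) := by
    have h1 := hac.integral_deriv_mul_eq_sub hac
    rw [hψ0, hψs] at h1
    have h2 : φ x ^ 2 = ∫ t in 0..s, -(deriv ψ t * ψ t + ψ t * deriv ψ t) := by
      rw [intervalIntegral.integral_neg, h1]; ring
    rw [h2, ← intervalIntegral.integral_const_mul]
    have hi : IntervalIntegrable (fun t => deriv ψ t * ψ t) volume 0 s :=
      hd1.mul_continuousOn hψc.continuousOn
    have hi' : IntervalIntegrable (fun t => ψ t * deriv ψ t) volume 0 s := by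
      simpa only [mul_comm] using hi
    refine intervalIntegral.integral_mono_ae hs0 (hi.add hi').neg (hGi.const_mul _) ?_
    filter_upwards [hder] with t ht
    have h3 : -(deriv ψ t * ψ t + ψ t * deriv ψ t) ≤ 2 * |deriv ψ t| * |ψ t| := by
      have := neg_abs_le (deriv ψ t * ψ t)
      rw [abs_mul] at this
      nlinarith
    have h4 : 2 * |deriv ψ t| * |ψ t| ≤ 2 * (h * N t) * |ψ t| := by gcongr
    have h5 : 2 * (h * N t) * |ψ t| ≤ h * κ⁻¹ * (N t ^ 2 + κ ^ 2 * ψ t ^ 2) := by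
      have : h * κ⁻¹ * (N t ^ 2 + κ ^ 2 * ψ t ^ 2) - 2 * (h * N t) * |ψ t|
        = h * κ⁻¹ * (N t - κ * |ψ t|) ^ 2 := by
        rw [← sq_abs (ψ t)]; field_simp; ring
      have h6 : 0 ≤ h * κ⁻¹ * (N t - κ * |ψ t|) ^ 2 := by positivity
      linarith
    exact h3.trans (h4.trans h5)
  have e3 : φ x ^ 2 ≤ h * min h κ⁻¹ * ∫ t in 0..s, (N t ^ 2 + κ ^ 2 * ψ t ^ 2) := by
    rcases le_total h κ⁻¹ with hc | hc
    · rwa [min_eq_left hc]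
    · rwa [min_eq_right hc]
  have hmin : 0 ≤ h * min h κ⁻¹ := by positivity
  rw [← ofReal_integral_eq_lintegral_ofReal
    ((intervalIntegrable_iff_integrableOn_Ioc_of_le hs0).1 hGi)
    (Filter.Eventually.of_forall fun t => by simp only [Pi.zero_apply]; positivity),
    ← ENNReal.ofReal_mul hmin, ← intervalIntegral.integral_of_le hs0]
  exact ENNReal.ofReal_le_ofReal e3

lemma isHaar_muH (m : ℕ) : (μH[(m : ℝ)] : Measure (Euc m)).IsAddHaarMeasure := by
  simpa using MeasureTheory.isAddHaarMeasure_hausdorffMeasure (E := EuclideanSpace ℝ (Fin m))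

lemma exists_muH_const (m : ℕ) : ∃ c : ℝ≥0, (μH[(m : ℝ)] : Measure (Euc m)) = c • volume := by
  haveI := isHaar_muH m
  exact ⟨_, Measure.isAddLeftInvariant_eq_smul _ _⟩

lemma isometry_Kc (m : ℕ) : Isometry (Kc (m := m) 0) := by
  refine Isometry.of_dist_eq fun x y => ?_
  simp [EuclideanSpace.dist_eq, Kc, Fin.sum_univ_succ]

lemma coord_move {d : ℕ} (B : AffineBasis (Fin (d+1)) ℝ (Euc d)) (z z' i : Fin (d+1)) (x : Euc d)
    (t : ℝ) : B.coord i (x + t • (B z - B z'))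
      = B.coord i x + t * ((if i = z then 1 else 0) - (if i = z' then 1 else 0)) := by
  have h1 := (B.coord i).map_vadd x (t • (B z - B z'))
  have h2 := (B.coord i).linearMap_vsub (B z) (B z')
  simp only [vadd_eq_add, vsub_eq_sub, map_smul, B.coord_apply, smul_eq_mul] at h1 h2
  rw [add_comm x, h1, h2]; ring

lemma mem_simT {d : ℕ} (B : AffineBasis (Fin (d+1)) ℝ (Euc d)) (x : Euc d) :
    x ∈ simT B ↔ ∀ i, 0 ≤ B.coord i x := by
  unfold simT
  rw [B.convexHull_eq_nonneg_coord]; rfl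

lemma simFace_sub {d : ℕ} (B : AffineBasis (Fin (d+1)) ℝ (Euc d)) (z : Fin (d+1)) :
    simFace B z ⊆ simT B :=
  convexHull_mono (image_subset_range _ _)

lemma coord_simFace {d : ℕ} (B : AffineBasis (Fin (d+1)) ℝ (Euc d)) (z : Fin (d+1)) (x : Euc d)
    (hx : x ∈ simFace B z) : B.coord z x = 0 := by
  have hc : Convex ℝ ((B.coord z) ⁻¹' {0}) := (convex_singleton (0:ℝ)).affine_preimage _
  refine convexHull_min ?_ hc hx
  rintro _ ⟨y, hy, rfl⟩
  have : z ≠ y := fun h => hy h.symm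
  simp [B.coord_apply, this]

lemma mem_simFace {d : ℕ} (B : AffineBasis (Fin (d+1)) ℝ (Euc d)) (z : Fin (d+1)) (x : Euc d)
    (h0 : ∀ i, 0 ≤ B.coord i x) (hz : B.coord z x = 0) : x ∈ simFace B z := by
  have hs : ∑ i ∈ Finset.univ.filter (· ≠ z), B.coord i x = 1 := by
    rw [← B.sum_coord_apply_eq_one x, Finset.sum_filter]
    refine Finset.sum_congr rfl fun i _ => ?_
    by_cases h : i = z <;> simp [h, hz]
  have hx : ∑ i ∈ Finset.univ.filter (· ≠ z), B.coord i x • B i = x := by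
    conv_rhs => rw [← B.linear_combination_coord_eq_self x]
    rw [Finset.sum_filter]
    refine Finset.sum_congr rfl fun i _ => ?_
    by_cases h : i = z <;> simp [h, hz]
  rw [← hx]
  refine (convex_convexHull ℝ _).sum_mem (fun i _ => h0 i) hs fun i hi => ?_
  exact subset_convexHull ℝ _ ⟨i, by simpa using hi, rfl⟩

lemma isCompact_simT {d : ℕ} (B : AffineBasis (Fin (d+1)) ℝ (Euc d)) : IsCompact (simT B) :=
  (finite_range _).isCompact_convexHull (𝕜 := ℝ)

lemma isCompact_simFace {d : ℕ} (B : AffineBasis (Fin (d+1)) ℝ (Euc d)) (z : Fin (d+1)) :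
    IsCompact (simFace B z) :=
  ((toFinite _).image _).isCompact_convexHull (𝕜 := ℝ)

lemma exists_grad {d : ℕ} (B : AffineBasis (Fin (d+1)) ℝ (Euc d)) (z : Fin (d+1)) :
    ∃ g : Euc d, ∀ x y : Euc d, B.coord z (x + y) = B.coord z x + inner ℝ g y := by
  refine ⟨(InnerProductSpace.toDual ℝ (Euc d)).symm (B.coord z).linear.toContinuousLinearMap, fun x y => ?_⟩
  rw [InnerProductSpace.toDual_symm_apply]
  have h1 := (B.coord z).map_vadd x y
  simp only [vadd_eq_add] at h1
  rw [add_comm x, h1, add_comm]; rfl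

lemma inradius_le {d : ℕ} (B : AffineBasis (Fin (d+1)) ℝ (Euc d)) (z : Fin (d+1)) (g : Euc d)
    (hg : ∀ x y : Euc d, B.coord z (x + y) = B.coord z x + inner ℝ g y) (hg0 : g ≠ 0) :
    0 ≤ inradius (simT B) ∧ inradius (simT B) * ‖g‖ ≤ 1 := by
  have hgp : 0 < ‖g‖ := norm_pos_iff.2 hg0
  have hb : ∀ r ∈ {r : ℝ | ∃ c, Metric.ball c r ⊆ simT B}, r ≤ ‖g‖⁻¹ := by
    rintro r ⟨c, hc⟩
    refine le_of_forall_lt fun a ha => ?_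
    by_contra! hcon
    have ha0 : 0 < a := (inv_pos.2 hgp).trans_le hcon
    set a' := (a + r) / 2
    have h1 : a < a' := by simp only [a']; linarith
    have h2 : a' < r := by simp only [a']; linarith
    have ha'0 : 0 < a' := ha0.trans h1
    have hm : c + (a' * ‖g‖⁻¹) • g ∈ simT B := by
      apply hc
      rw [mem_ball, dist_eq_norm, add_sub_cancel_left, norm_smul, Real.norm_eq_abs,
        abs_of_nonneg (by positivity), mul_assoc, inv_mul_cancel₀ hgp.ne', mul_one]
      exact h2
    have hm0 : c ∈ simT B := hc (mem_ball_self (by linarith))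
    have h3 : B.coord z (c + (a' * ‖g‖⁻¹) • g) = B.coord z c + a' * ‖g‖ := by
      rw [hg, inner_smul_right, real_inner_self_eq_norm_sq]
      field_simp
    have h4 : B.coord z (c + (a' * ‖g‖⁻¹) • g) ≤ 1 := by
      rw [← B.sum_coord_apply_eq_one (c + (a' * ‖g‖⁻¹) • g)]
      exact Finset.single_le_sum (f := fun i => B.coord i (c + (a' * ‖g‖⁻¹) • g))
        (fun i _ => (mem_simT B _).1 hm i) (Finset.mem_univ z)
    have h5 := (mem_simT B _).1 hm0 z
    have h6 : 1 < a' * ‖g‖ := by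
      have : ‖g‖⁻¹ * ‖g‖ < a' * ‖g‖ := by
        apply mul_lt_mul_of_pos_right _ hgp; linarith
      rwa [inv_mul_cancel₀ hgp.ne'] at this
    linarith
  have hne : (0:ℝ) ∈ {r : ℝ | ∃ c, Metric.ball c r ⊆ simT B} := ⟨0, by simp⟩
  constructor
  · exact le_csSup ⟨_, hb⟩ hne
  · have := csSup_le ⟨_, hne⟩ hb
    calc _ ≤ ‖g‖⁻¹ * ‖g‖ := by gcongr; exact this
      _ = 1 := inv_mul_cancel₀ hgp.ne'

lemma face_main {m : ℕ} (c : ℝ≥0) (hc : (μH[(m : ℝ)] : Measure (Euc m)) = c • volume)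
    (B : AffineBasis (Fin (m+1+1)) ℝ (Euc (m+1))) (z z' : Fin (m+1+1)) (hzz : z ≠ z')
    (g : Euc (m+1)) (hg : ∀ x y, B.coord z (x + y) = B.coord z x + inner ℝ g y) (hg0 : g ≠ 0)
    (φ : Euc (m+1) → ℝ) (L : ℝ≥0) (hL : LipschitzWith L φ) (hφ : ∀ x ∈ simFace B z', φ x = 0)
    (κ : ℝ) (hκ : 0 < κ) :
    μH[(m : ℝ)] (simFace B z) < ∞ ∧
    ∫⁻ x in simFace B z, ENNReal.ofReal (φ x ^ 2) ∂μH[(m : ℝ)]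
      ≤ c * (ENNReal.ofReal (Metric.diam (simT B) * min (Metric.diam (simT B)) κ⁻¹)
        * (ENNReal.ofReal ‖g‖ * ∫⁻ y in simT B, ENNReal.ofReal (‖gradient φ y‖ ^ 2
        + κ ^ 2 * φ y ^ 2))) := by
  have hgp : 0 < ‖g‖ := norm_pos_iff.2 hg0
  set v := B z - B z' with hv
  have hgv : inner ℝ g v = 1 := by
    have := hg (B z') v
    rw [hv, add_sub_cancel] at this
    simp only [B.coord_apply, hzz, if_true, if_false] at this
    rw [hv]; linarith
  obtain ⟨b, hb⟩ : ∃ b : OrthonormalBasis (Fin (m+1)) ℝ (Euc (m+1)), b 0 = ‖g‖⁻¹ • g := by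
    have ho : Orthonormal ℝ (({0} : Set (Fin (m+1))).domRestrict (fun _ => ‖g‖⁻¹ • g)) := by
      constructor
      · intro i
        change ‖‖g‖⁻¹ • g‖ = 1
        simp [norm_smul, hgp.ne']
      · intro i j hij
        exact absurd (Subsingleton.elim i j) hij
    obtain ⟨b, hb⟩ := ho.exists_orthonormalBasis_extension_of_card_eq (by simp)
    exact ⟨b, hb 0 rfl⟩
  have hr : ∀ y, b.repr y 0 = ‖g‖⁻¹ * inner ℝ g y := fun y => by
    rw [b.repr_apply_apply, hb, real_inner_smul_left]
  have hrv : b.repr v 0 = ‖g‖⁻¹ := by rw [hr, hgv, mul_one]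
  set Φ : Euc m → Euc (m+1) := fun w => B z' + b.repr.symm (Kc 0 w) with hΦ
  have hΦi : Isometry Φ :=
    (isometry_add_left (B z')).comp (b.repr.symm.isometry.comp (isometry_Kc m))
  have hpF : B z' ∈ simFace B z := subset_convexHull ℝ _ ⟨z', fun h => hzz h.symm, rfl⟩
  have hFr : simFace B z ⊆ range Φ := by
    intro y hy
    have h1 := hg (B z') (y - B z')
    rw [add_sub_cancel, coord_simFace B z y hy, coord_simFace B z _ hpF, zero_add] at h1
    have h2 : b.repr (y - B z') 0 = 0 := by rw [hr, ← h1, mul_zero]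
    refine ⟨WithLp.toLp 2 (fun i : Fin m => b.repr (y - B z') i.succ), ?_⟩
    have h3 : Kc 0 (WithLp.toLp 2 (fun i : Fin m => b.repr (y - B z') i.succ))
        = b.repr (y - B z') := by
      ext i
      refine Fin.cases ?_ (fun j => ?_) i
      · simpa [Kc] using h2.symm
      · simp [Kc]
    simp only [hΦ]
    rw [h3, LinearIsometryEquiv.symm_apply_apply, add_sub_cancel]
  have hFc := isCompact_simFace B z
  have hFm : MeasurableSet (simFace B z) := hFc.measurableSet
  have hTm : MeasurableSet (simT B) := (isCompact_simT B).measurableSet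
  have hm0 : (0:ℝ) ≤ m := by positivity
  constructor
  · have h1 := hΦi.hausdorffMeasure_preimage (d := (m:ℝ)) (Or.inl hm0) (simFace B z)
    rw [inter_eq_left.2 hFr] at h1
    rw [← h1]
    haveI := isHaar_muH m
    exact (hΦi.isClosedEmbedding.isCompact_preimage hFc).measure_lt_top
  · set G : Euc (m+1) → ℝ≥0∞ := fun y => ENNReal.ofReal (‖gradient φ y‖ ^ 2
        + κ ^ 2 * φ y ^ 2) with hG
    have hφm : Measurable φ := hL.continuous.measurable
    have hGm : Measurable G := by
      have : Measurable (gradient φ) := by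
        unfold gradient
        exact (InnerProductSpace.toDual ℝ (Euc (m+1))).symm.continuous.measurable.comp (measurable_fderiv ℝ φ)
      fun_prop
    have hfm : Measurable ((simFace B z).indicator fun x => ENNReal.ofReal (φ x ^ 2)) :=
      Measurable.indicator (by fun_prop) hFm
    have e1 : ∫⁻ x in simFace B z, ENNReal.ofReal (φ x ^ 2) ∂μH[(m : ℝ)]
        = c * ∫⁻ w, (simFace B z).indicator (fun x => ENNReal.ofReal (φ x ^ 2)) (Φ w) := by
      have h1 : (μH[(m:ℝ)] : Measure (Euc (m+1))).restrict (simFace B z)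
          = ((μH[(m:ℝ)]).restrict (range Φ)).restrict (simFace B z) := by
        rw [Measure.restrict_restrict hFm, inter_eq_left.2 hFr]
      rw [h1, ← hΦi.map_hausdorffMeasure (Or.inl hm0), ← lintegral_indicator hFm,
        lintegral_map hfm hΦi.continuous.measurable, hc, lintegral_smul_measure]
      rfl
    rw [e1]
    gcongr
    -- ae differentiability
    have hdiff : ∀ᵐ w : Euc m, ∀ᵐ t : ℝ, DifferentiableAt ℝ φ (Φ w + t • v) := by
      have hN : MeasurableSet {y | DifferentiableAt ℝ φ y}ᶜ :=
        (measurableSet_of_differentiableAt ℝ φ).compl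
      have h0 : volume {y | DifferentiableAt ℝ φ y}ᶜ = 0 := hL.ae_differentiableAt (μ := volume)
      have h1 := tonelli_slant b (B z') v (by rw [hrv]; positivity)
        (({y | DifferentiableAt ℝ φ y}ᶜ).indicator 1) (measurable_one.indicator hN)
      rw [lintegral_indicator_one hN, h0, mul_zero, lintegral_eq_zero_iff] at h1
      · filter_upwards [h1] with w hw
        simp only [Pi.zero_apply] at hw
        rw [lintegral_eq_zero_iff] at hw
        · filter_upwards [hw] with t ht
          by_contra hcon
          simp [indicator, hcon, hΦ] at ht
          exact hcon ht
        · exact (measurable_one.indicator hN).comp (by fun_prop)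
      · apply Measurable.lintegral_prod_right' (f := fun p : Euc m × ℝ => ({y | DifferentiableAt ℝ φ y}ᶜ).indicator 1 (B z' + b.repr.symm (Kc 0 p.1) + p.2 • v))
        have hk : Measurable fun w : Euc m => b.repr.symm (Kc 0 w) :=
          (b.repr.symm.isometry.comp (isometry_Kc m)).continuous.measurable
        exact (measurable_one.indicator hN).comp
          ((measurable_const.add (hk.comp measurable_fst)).add (measurable_snd.smul_const v))
    have e2 := tonelli_slant b (B z') v (by rw [hrv]; positivity) ((simT B).indicator G)
      (hGm.indicator hTm)
    rw [hrv, abs_of_pos (by positivity), inv_inv, lintegral_indicator hTm] at e2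
    rw [← e2]
    rw [← lintegral_const_mul' _ _ ENNReal.ofReal_ne_top]
    refine lintegral_mono_ae ?_
    filter_upwards [hdiff] with w hw
    by_cases hwF : Φ w ∈ simFace B z
    swap
    · simp [indicator, hwF]
    rw [indicator_of_mem hwF]
    have hTw := (mem_simT B _).1 (simFace_sub B z hwF)
    set s := B.coord z' (Φ w) with hs
    have hs1 : s ≤ 1 := by
      rw [← B.sum_coord_apply_eq_one (Φ w)]
      exact Finset.single_le_sum (f := fun i => B.coord i (Φ w))
        (fun i _ => hTw i) (Finset.mem_univ z')
    have hmove : ∀ t, 0 ≤ t → t ≤ s → ∀ i, 0 ≤ B.coord i (Φ w + t • v) := by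
      intro t ht0 hts i
      rw [hv, coord_move]
      have := hTw i
      by_cases h2 : i = z'
      · subst h2
        simp only [hzz.symm, if_true, if_false]
        linarith
      · by_cases h3 : i = z
        · simp only [h2, h3, hzz, if_true, if_false]
          rw [h3] at this
          linarith
        · simp only [h2, h3, if_false]
          linarith
    have hz0 : φ (Φ w + s • v) = 0 := by
      apply hφ
      apply mem_simFace B z' _ (hmove s (hTw z') le_rfl)
      rw [hv, coord_move]
      simp only [hzz.symm, if_true, if_false]
      linarith
    have hvd : ‖v‖ ≤ Metric.diam (simT B) := by
      rw [hv, ← dist_eq_norm]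
      exact dist_le_diam_of_mem (isCompact_simT B).isBounded
        (subset_convexHull ℝ _ ⟨z, rfl⟩) (subset_convexHull ℝ _ ⟨z', rfl⟩)
    refine (line_est φ L hL (Φ w) v s _ κ (hTw z') hs1 hvd hκ hz0 hw).trans ?_
    refine mul_le_mul' le_rfl ?_
    rw [← lintegral_indicator measurableSet_Ioc]
    refine lintegral_mono fun t => ?_
    by_cases ht : t ∈ Ioc 0 s
    · have : Φ w + t • v ∈ simT B := (mem_simT B _).2 (hmove t ht.1.le ht.2)
      rw [indicator_of_mem ht]
      simp only [hΦ] at this ⊢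
      rw [indicator_of_mem this]
    · rw [indicator_of_notMem ht]; simp

/-- robust face (trace) estimate on a simplex. For a nondegenerate
`d`-simplex `T` with shape parameter `≤ μ` and two distinct faces `F` (opposite vertex
`z`) and `F'` (opposite vertex `z'`), every Lipschitz `φ` vanishing on `F'` satisfies
`∫_F φ dH^{d−1} ≤ C |F|^{1/2} min{h_T, κ⁻¹}^{1/2} ‖φ‖_{E, int T}` with `C = C(d, μ)`
independent of `κ`. -/
theorem robust_face_trace_estimate (d : ℕ) (hd : 2 ≤ d) (μ : ℝ) :
    ∃ C : ℝ, 0 < C ∧ ∀ κ : ℝ, 0 < κ →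
      ∀ B : AffineBasis (Fin (d + 1)) ℝ (Euc d),
        Metric.diam (simT B) ≤ μ * inradius (simT B) →
        ∀ z z' : Fin (d + 1), z ≠ z' →
          ∀ φ : Euc d → ℝ, (∃ L : ℝ≥0, LipschitzWith L φ) →
            (∀ x ∈ simFace B z', φ x = 0) →
            (∫ x in simFace B z, φ x ∂(μH[(d : ℝ) - 1]))
              ≤ C * Real.sqrt (μH[(d : ℝ) - 1] (simFace B z)).toReal
                  * Real.sqrt (min (Metric.diam (simT B)) κ⁻¹)
                  * Real.sqrt (energySq κ (interior (simT B)) φ) := by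
  obtain ⟨m, rfl⟩ : ∃ m, d = m + 1 := ⟨d - 1, by omega⟩
  obtain ⟨c, hc⟩ := exists_muH_const m
  refine ⟨Real.sqrt (c * |μ|) + 1, by positivity, ?_⟩
  intro κ hκ B hB z z' hzz φ ⟨L, hL⟩ hφ
  have hdm : ((m + 1 : ℕ) : ℝ) - 1 = (m : ℝ) := by push_cast; ring
  rw [hdm]
  obtain ⟨g, hg⟩ := exists_grad B z
  have hg0 : g ≠ 0 := by
    rintro rfl
    have := hg (B z') (B z - B z')
    rw [add_sub_cancel] at this
    simp [B.coord_apply, hzz] at this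
  obtain ⟨hρ0, hρ⟩ := inradius_le B z g hg hg0
  obtain ⟨hfin, hmain⟩ := face_main c hc B z z' hzz g hg hg0 φ L hL hφ κ hκ
  set h := Metric.diam (simT B) with hh
  have hh0 : 0 ≤ h := diam_nonneg
  have hmin0 : 0 ≤ min h κ⁻¹ := by positivity
  have hhg : h * ‖g‖ ≤ |μ| := by
    calc h * ‖g‖ ≤ (μ * inradius (simT B)) * ‖g‖ := by gcongr
      _ = μ * (inradius (simT B) * ‖g‖) := by ring
      _ ≤ |μ| * (inradius (simT B) * ‖g‖) := by gcongr; exact le_abs_self μ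
      _ ≤ |μ| * 1 := by gcongr
      _ = |μ| := mul_one _
  have hFc := isCompact_simFace B z
  have hTc := isCompact_simT B
  have hφc : Continuous φ := hL.continuous
  -- energy
  have hgm : Measurable (gradient φ) := by
    unfold gradient
    exact (InnerProductSpace.toDual ℝ (Euc (m+1))).symm.continuous.measurable.comp
      (measurable_fderiv ℝ φ)
  have hgb : ∀ y, ‖gradient φ y‖ ≤ L := fun y => by
    simp only [gradient, LinearIsometryEquiv.norm_map]
    exact norm_fderiv_le_of_lipschitz ℝ hL
  have hi1 : IntegrableOn (fun y => ‖gradient φ y‖ ^ 2) (simT B) := by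
    refine Measure.integrableOn_of_bounded (M := L ^ 2) hTc.measure_lt_top.ne
      (by fun_prop) (Filter.Eventually.of_forall fun y => ?_)
    rw [Real.norm_eq_abs, abs_of_nonneg (by positivity)]
    gcongr
    exact hgb y
  have hi2 : IntegrableOn (fun y => φ y ^ 2) (simT B) :=
    (by fun_prop : Continuous fun y => φ y ^ 2).continuousOn.integrableOn_compact hTc
  have hae : (interior (simT B) : Set (Euc (m+1))) =ᵐ[volume] simT B :=
    interior_ae_eq_of_null_frontier ((convex_convexHull ℝ _).addHaar_frontier volume)
  set E := energySq κ (interior (simT B)) φ with hE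
  have hEeq : E = ∫ y in simT B, (‖gradient φ y‖ ^ 2 + κ ^ 2 * φ y ^ 2) := by
    rw [hE, energySq, gradSq, sqIntg, setIntegral_congr_set hae, setIntegral_congr_set hae,
      integral_add hi1 (hi2.const_mul _), integral_const_mul]
  have hE0 : 0 ≤ E := by
    rw [hEeq]; exact integral_nonneg fun y => by positivity
  have hi3 : IntegrableOn (fun y => ‖gradient φ y‖ ^ 2 + κ ^ 2 * φ y ^ 2) (simT B) :=
    hi1.add (hi2.const_mul _)
  rw [← ofReal_integral_eq_lintegral_ofReal hi3
    (Filter.Eventually.of_forall fun t => by simp only [Pi.zero_apply]; positivity), ← hEeq,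
    ← ENNReal.ofReal_mul (norm_nonneg g), ← ENNReal.ofReal_mul (by positivity),
    ← ENNReal.ofReal_coe_nnreal, ← ENNReal.ofReal_mul (by positivity)] at hmain
  haveI : IsFiniteMeasure ((μH[(m:ℝ)] : Measure (Euc (m+1))).restrict (simFace B z)) :=
    ⟨by rw [Measure.restrict_apply_univ]; exact hfin⟩
  have hbi : ∀ f : Euc (m+1) → ℝ, Continuous f →
      Integrable f ((μH[(m:ℝ)] : Measure (Euc (m+1))).restrict (simFace B z)) := fun f hf => by
    obtain ⟨M, hM⟩ := hFc.exists_bound_of_continuousOn hf.continuousOn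
    refine Integrable.of_bound hf.measurable.aestronglyMeasurable M ?_
    exact (ae_restrict_iff' hFc.measurableSet).2 (Filter.Eventually.of_forall hM)
  have hQi := hbi (fun x => φ x ^ 2) (by fun_prop)
  have hφi := hbi φ hφc
  rw [← ofReal_integral_eq_lintegral_ofReal hQi
    (Filter.Eventually.of_forall fun t => by simp only [Pi.zero_apply]; positivity),
    ENNReal.ofReal_le_ofReal_iff (by positivity)] at hmain
  set Q := ∫ x in simFace B z, φ x ^ 2 ∂μH[(m:ℝ)] with hQ
  set I := ∫ x in simFace B z, φ x ∂μH[(m:ℝ)] with hI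
  set A := (μH[(m:ℝ)] (simFace B z)).toReal with hA
  have hA0 : 0 ≤ A := ENNReal.toReal_nonneg
  have hQ0 : 0 ≤ Q := integral_nonneg fun y => by positivity
  have hquad : ∀ t : ℝ, 0 ≤ A * (t * t) + (-2 * I) * t + Q := fun t => by
    have h0 : 0 ≤ ∫ x in simFace B z, (φ x - t) ^ 2 ∂μH[(m:ℝ)] :=
      integral_nonneg fun y => by positivity
    have h1 : ∫ x in simFace B z, (φ x - t) ^ 2 ∂μH[(m:ℝ)]
        = Q + (-2 * t) * I + A * t ^ 2 := by
      have h2 : A * t ^ 2 = ∫ x in simFace B z, t ^ 2 ∂μH[(m:ℝ)] := by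
        rw [setIntegral_const, smul_eq_mul]; rfl
      rw [h2, hQ, hI, ← integral_const_mul, ← integral_add hQi (hφi.const_mul _),
        ← integral_add (hbi (fun x => φ x ^ 2 + -2 * t * φ x) (by fun_prop)) (integrable_const _)]
      congr 1; ext x; ring
    rw [h1] at h0
    linarith
  have hdisc := discrim_le_zero hquad
  have hIAQ : I ^ 2 ≤ A * Q := by unfold discrim at hdisc; linarith
  have hQle : Q ≤ (c * |μ|) * min h κ⁻¹ * E := by
    calc Q ≤ _ := hmain
      _ = c * (h * ‖g‖) * min h κ⁻¹ * E := by ring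
      _ ≤ _ := by gcongr
  calc I ≤ Real.sqrt (A * Q) := Real.le_sqrt_of_sq_le hIAQ
    _ ≤ Real.sqrt (A * ((c * |μ|) * min h κ⁻¹ * E)) := by gcongr
    _ = Real.sqrt (c * |μ|) * Real.sqrt A * Real.sqrt (min h κ⁻¹) * Real.sqrt E := by
      rw [Real.sqrt_mul hA0, Real.sqrt_mul (by positivity), Real.sqrt_mul (by positivity)]
      ring
    _ ≤ _ := by gcongr; linarith
end
end
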